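/- arXiv:0905.0913 — 2 statements merged into one kernel-verified Lean document; each statement's English description precedes it below -/
import Mathlib

section
/- Let A be a tree and G ≤ Aut(A) a subgroup that leaves no nonempty proper subtree of A invariant and does not stabilize any end of A. If G⁺ is boundedly simple and nontrivial, then there exist cardinals n, m ≥ 3 such that A is an almost (n,m)-regular tree (a subdivision of the (n,m)-biregular tree). -/
/-!
Write `Γ = H⁺`, a nontrivial normal subgroup of `H` generated by edge fixators.

*Minimality.* Since `H` preserves no proper subtree and no end, its normal subgroup `Γ` preserves
no proper subtree either (`inv_subtree_eq_univ`): the `Γ`-invariant subtrees pairwise meet,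
and either they escape to infinity and define an end fixed by `H`, or their intersection is a
nonempty subtree invariant under `H`. Consequently every half-tree meets every `Γ`-orbit
(`half_tree_meets`).

*Counting quasimorphisms.* Fix a `Γ`-invariant set of directed segments of length `L`. The
number of such segments on `[x, y]` minus the number on `[y, x]` is additive along geodesics up to
a constant, so `γ ↦ cnt [x, γ x] - cnt [γ x, x]` is a quasimorphism on `Γ`, uniformly
bounded on elements with a fixed point. The group `Γ` has nontrivial elements fixing an edge, and
bounded simplicity writes all of `Γ` with boundedly many conjugates of one of them,
so the quasimorphism is bounded
(`qm_bound`).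

*Local homogeneity.* Suppose a ramification point `v` has two neighbors that are not exchanged by
the stabilizer of `v`. Then some neighbor `b` is inequivalent to two others. Record a geodesic
through the orbit of `v` by the word whose letters say whether it leaves an orbit point through an
edge of the class of `(v, b)`. Since `Γ` is generated by elliptic elements, an invariant potential
shows that this class is the same at both ends of a segment between consecutive orbit points
(`letter_comm`), and all words without two adjacent letters `b` occur (`exists_next`). The
periodic word `b a b a a b a a a` contains `b a b a a b`, but its reverse does not, so the
associated counting quasimorphism is unbounded (`brooks_false`). Hence stabilizers of
ramification points are transitive on neighbors (`ram_homogeneous`).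

*Regularity.* Let `[r, s]` be a segment of length `k` between ramification points with no
ramification point inside. By local homogeneity, `[r, s]` unfolds over the tree: a vertex at
distance `d` from `r` lies in the orbit of the point of `[r, s]` whose position is the distance
from `d` to the nearest multiple of `2 * k` (`orb_zigzag`). This position is the required coloring.
-/

open Pointwise

namespace BSTrees

universe u

variable {V : Type u} {I : Type*}

/-- `π` is an automorphism of the graph `G`. -/
def IsAut (G : SimpleGraph V) (π : Equiv.Perm V) : Prop :=
  ∀ x y : V, G.Adj (π x) (π y) ↔ G.Adj x y

/-- The automorphism group of `G`, as a subgroup of `Equiv.Perm V`. -/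
def autGroup (G : SimpleGraph V) : Subgroup (Equiv.Perm V) where
  carrier := {π | IsAut G π}
  one_mem' := fun _ _ => Iff.rfl
  mul_mem' := fun {a b} ha hb x y => (ha (b x) (b y)).trans (hb x y)
  inv_mem' := fun {a} ha x y => by
    have h := (ha (a⁻¹ x) (a⁻¹ y)).symm
    simpa using h

/-- `z` lies on the geodesic between `x` and `y`. -/
def OnGeodesic (G : SimpleGraph V) (x y z : V) : Prop :=
  G.dist x z + G.dist z y = G.dist x y

/-- A set of vertices closed under geodesics (inducing a subtree). -/
def GeodClosed (G : SimpleGraph V) (S : Set V) : Prop :=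
  ∀ x ∈ S, ∀ y ∈ S, ∀ z, OnGeodesic G x y z → z ∈ S

/-- A rotation: an automorphism fixing some vertex. -/
def IsRotation (π : Equiv.Perm V) : Prop := ∃ v, π v = v

/-- An inversion (symmetry): an automorphism swapping the endpoints of some edge. -/
def IsInversion (G : SimpleGraph V) (π : Equiv.Perm V) : Prop :=
  ∃ x y, G.Adj x y ∧ π x = y ∧ π y = x

/-- A translation: neither a rotation nor an inversion. -/
def IsTranslation (G : SimpleGraph V) (π : Equiv.Perm V) : Prop :=
  ¬ IsRotation π ∧ ¬ IsInversion G π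

/-- `ℓ` is the translation length of `π`: the minimum of `dist s (π s)`. -/
def TranslationLengthIs (G : SimpleGraph V) (π : Equiv.Perm V) (ℓ : ℕ) : Prop :=
  IsLeast {d | ∃ s, G.dist s (π s) = d} ℓ

/-- Elements of `H` pointwise stabilizing some edge of `G`. -/
def edgeStabilizers (G : SimpleGraph V) (H : Subgroup (Equiv.Perm V)) :
    Set (Equiv.Perm V) :=
  {π | π ∈ H ∧ ∃ x y, G.Adj x y ∧ π x = x ∧ π y = y}

/-- `H⁺`: the subgroup generated by pointwise stabilizers in `H` of edges. -/
def plusGroup (G : SimpleGraph V) (H : Subgroup (Equiv.Perm V)) :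
    Subgroup (Equiv.Perm V) :=
  Subgroup.closure (edgeStabilizers G H)

/-- The group of color-preserving automorphisms of the colored tree `(G, f)`. -/
def autf (G : SimpleGraph V) (f : V → I) : Subgroup (Equiv.Perm V) where
  carrier := {π | IsAut G π ∧ ∀ v, f (π v) = f v}
  one_mem' := ⟨fun _ _ => Iff.rfl, fun _ => rfl⟩
  mul_mem' := fun {a b} ha hb =>
    ⟨fun x y => (ha.1 (b x) (b y)).trans (hb.1 x y),
     fun v => (ha.2 (b v)).trans (hb.2 v)⟩
  inv_mem' := fun {a} ha => by
    refine ⟨fun x y => ?_, fun v => ?_⟩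
    · have h := (ha.1 (a⁻¹ x) (a⁻¹ y)).symm
      simpa using h
    · have h := (ha.2 (a⁻¹ v)).symm
      simpa using h

/-- `Aut_f⁺(A)`. -/
def autfPlus (G : SimpleGraph V) (f : V → I) : Subgroup (Equiv.Perm V) :=
  plusGroup G (autf G f)

/-- `Aut⁺(A)`. -/
def autPlus (G : SimpleGraph V) : Subgroup (Equiv.Perm V) :=
  plusGroup G (autGroup G)

/-- A ray in `G`. -/
def IsRay (G : SimpleGraph V) (r : ℕ → V) : Prop :=
  Function.Injective r ∧ ∀ n, G.Adj (r n) (r (n + 1))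

/-- Two rays determine the same end iff their images have infinite intersection. -/
def SameEnd (r r' : ℕ → V) : Prop := (Set.range r ∩ Set.range r').Infinite

/-- `H` stabilizes the end of the ray `r`. -/
def StabilizesEnd (G : SimpleGraph V) (H : Subgroup (Equiv.Perm V)) (r : ℕ → V) :
    Prop :=
  ∀ π ∈ H, ∀ r' : ℕ → V, IsRay G r' → SameEnd r' r → SameEnd (π ∘ r') r

/-- `H` does not stabilize any end of `G`. -/
def NoStabilizedEnd (G : SimpleGraph V) (H : Subgroup (Equiv.Perm V)) : Prop :=
  ¬ ∃ r : ℕ → V, IsRay G r ∧ StabilizesEnd G H r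

/-- `H` leaves no nonempty proper subtree of `G` invariant. -/
def NoInvariantSubtree (G : SimpleGraph V) (H : Subgroup (Equiv.Perm V)) : Prop :=
  ¬ ∃ S : Set V, S.Nonempty ∧ S ≠ Set.univ ∧ GeodClosed G S ∧
    ∀ π ∈ H, π '' S = S

/-- A path in the tree: a nonempty geodesically closed set in which every vertex
has at most two neighbors inside the set. -/
def IsPathSet (G : SimpleGraph V) (C : Set V) : Prop :=
  C.Nonempty ∧ GeodClosed G C ∧
    ∀ v ∈ C, ∀ a ∈ C, ∀ b ∈ C, ∀ c ∈ C,
      G.Adj v a → G.Adj v b → G.Adj v c → a = b ∨ a = c ∨ b = c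

/-- `p` is a nearest-point projection onto `C`. -/
def IsProj (G : SimpleGraph V) (C : Set V) (p : V → V) : Prop :=
  ∀ x, p x ∈ C ∧ ∀ c ∈ C, G.dist x (p x) ≤ G.dist x c

/-- Tits' independence property `(P)` for `H ≤ Aut(G)`: for every path `C` with
nearest-point projection `p`, and every family of elements of the pointwise
stabilizer of `C`, there is a unique element of that stabilizer agreeing with
the `s`-th member of the family on the fiber `p⁻¹(s)`, for every `s ∈ C`. -/
def PropertyP (G : SimpleGraph V) (H : Subgroup (Equiv.Perm V)) : Prop :=
  ∀ C : Set V, IsPathSet G C → ∀ p : V → V, IsProj G C p →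
    ∀ gs : V → Equiv.Perm V,
      (∀ s ∈ C, gs s ∈ H ∧ ∀ c ∈ C, gs s c = c) →
      ∃! g : Equiv.Perm V, g ∈ H ∧ (∀ c ∈ C, g c = c) ∧
        ∀ s ∈ C, ∀ x, p x = s → g x = gs s x

/-- A group is `N`-boundedly simple if every nontrivial element is a product of
at most `N` conjugates of `g` or of `g⁻¹`, for every nontrivial `g`. -/
def IsNBoundedlySimple (Γ : Type*) [Group Γ] (N : ℕ) : Prop :=
  ∀ g h : Γ, g ≠ 1 → h ≠ 1 →
    ∃ l : List Γ, l.length ≤ N ∧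
      (∀ x ∈ l, ∃ c : Γ, x = c * g * c⁻¹ ∨ x = c * g⁻¹ * c⁻¹) ∧ l.prod = h

/-- A group is boundedly simple if it is `N`-boundedly simple for some `N`. -/
def IsBoundedlySimple (Γ : Type*) [Group Γ] : Prop :=
  ∃ N : ℕ, IsNBoundedlySimple Γ N

/-- The conjugacy class of `g` under conjugation by elements of `H`. -/
def conjClassIn {Γ : Type*} [Group Γ] (H : Subgroup Γ) (g : Γ) : Set Γ :=
  {k | ∃ c ∈ H, k = c * g * c⁻¹}

/-- A ramification point: a vertex with at least three neighbors. -/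
def IsRamification (G : SimpleGraph V) (r : V) : Prop :=
  ∃ a b c, a ≠ b ∧ a ≠ c ∧ b ≠ c ∧ G.Adj r a ∧ G.Adj r b ∧ G.Adj r c

/-- An `(n,m)`-biregular tree: a proper 2-coloring where every vertex of the
first color has exactly `n` neighbors and every vertex of the second has `m`. -/
def IsBiregular (G : SimpleGraph V) (n m : Cardinal.{u}) : Prop :=
  ∃ c : V → Bool, (∀ x y, G.Adj x y → c x ≠ c y) ∧
    (∀ v, c v = false → Cardinal.mk (G.neighborSet v) = n) ∧
    (∀ v, c v = true → Cardinal.mk (G.neighborSet v) = m)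

/-- An almost `(n,m)`-regular tree: a subdivision of the `(n,m)`-biregular tree,
described by a coloring `g : V → {0,…,k}`. -/
def IsAlmostBiregular (G : SimpleGraph V) (n m : Cardinal.{u}) : Prop :=
  ∃ k : ℕ, 1 ≤ k ∧ ∃ g : V → ℕ, (∀ v, g v ≤ k) ∧
    (∀ v, g v = 0 → (∀ w, G.Adj v w → g w = 1) ∧
      Cardinal.mk (G.neighborSet v) = n) ∧
    (∀ v, g v = k → (∀ w, G.Adj v w → g w = k - 1) ∧
      Cardinal.mk (G.neighborSet v) = m) ∧
    (∀ v, 0 < g v → g v < k → ∃ a b, a ≠ b ∧ G.Adj v a ∧ G.Adj v b ∧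
      g a = g v - 1 ∧ g b = g v + 1 ∧ ∀ w, G.Adj v w → w = a ∨ w = b)

/-- The axis of a translation: vertices of minimal displacement. -/
def axisSet (G : SimpleGraph V) (π : Equiv.Perm V) : Set V :=
  {v | ∀ w, G.dist v (π v) ≤ G.dist w (π w)}

/-! ### Distances in trees -/

section TreeMetric

variable {G : SimpleGraph V}

theorem dist_tri (hG : G.IsTree) (x y z : V) : G.dist x z ≤ G.dist x y + G.dist y z :=
  hG.connected.dist_triangle

theorem dist_sym (G : SimpleGraph V) (x y : V) : G.dist x y = G.dist y x :=
  SimpleGraph.dist_comm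

theorem eq_of_dist_zero (hG : G.IsTree) {x y : V} (h : G.dist x y = 0) : x = y :=
  hG.connected.dist_eq_zero_iff.1 h

theorem dist_pos (hG : G.IsTree) {x y : V} (h : x ≠ y) : 0 < G.dist x y :=
  hG.connected.pos_dist_of_ne h

/-- The first vertex after `x` on the geodesic from `x` to `y`. -/
theorem exists_toward (hG : G.IsTree) {x y : V} (h : x ≠ y) :
    ∃ w, G.Adj x w ∧ G.dist w y + 1 = G.dist x y := by
  obtain ⟨p, hp⟩ := hG.connected.exists_walk_length_eq_dist x y
  cases p with
  | nil => exact absurd rfl h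
  | @cons _ w _ hw q =>
    refine ⟨w, hw, ?_⟩
    have h1 := SimpleGraph.dist_le q
    have h2 := dist_tri hG x w y
    have h3 := SimpleGraph.dist_eq_one_iff_adj.2 hw
    simp only [SimpleGraph.Walk.length_cons] at hp
    omega

theorem toward_unique (hG : G.IsTree) {x y w w' : V} (hw : G.Adj x w) (hw' : G.Adj x w')
    (h : G.dist w y + 1 = G.dist x y) (h' : G.dist w' y + 1 = G.dist x y) : w = w' := by
  obtain ⟨p, hp⟩ := hG.connected.exists_walk_length_eq_dist w y
  obtain ⟨q, hq⟩ := hG.connected.exists_walk_length_eq_dist w' y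
  have h1 := SimpleGraph.Walk.isPath_of_length_eq_dist (SimpleGraph.Walk.cons hw p)
    (by rw [SimpleGraph.Walk.length_cons]; omega)
  have h2 := SimpleGraph.Walk.isPath_of_length_eq_dist (SimpleGraph.Walk.cons hw' q)
    (by rw [SimpleGraph.Walk.length_cons]; omega)
  have h3 := (hG.existsUnique_path x y).unique h1 h2
  have h4 := congrArg (fun r => r.snd) h3
  simpa using h4

theorem dist_adj (hG : G.IsTree) (u : V) {v w : V} (h : G.Adj v w) :
    G.dist v u = G.dist w u + 1 ∨ G.dist w u = G.dist v u + 1 := by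
  have := hG.dist_eq_dist_add_one_of_adj u h
  rwa [dist_sym G u v, dist_sym G u w] at this

/-- A walk `y → x → z` that does not backtrack at `x` is a geodesic. -/
theorem dist_add_of_toward_ne (hG : G.IsTree) {x y a b : V} (hxa : G.Adj x a)
    (hay : G.dist a y + 1 = G.dist x y) (hxb : G.Adj x b) (hab : a ≠ b) :
    ∀ n z, G.dist x z = n + 1 → G.dist b z = n → G.dist z y = G.dist x z + G.dist x y := by
  intro n
  induction n with
  | zero =>
    intro z h1 h2
    obtain rfl := eq_of_dist_zero hG h2
    rcases dist_adj hG y hxb with h | h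
    · exact absurd (toward_unique hG hxa hxb hay h.symm) hab
    · omega
  | succ n ih =>
    intro z h1 h2
    have hzb : z ≠ b := by rintro rfl; simp at h2
    obtain ⟨z', hz', hz'b⟩ := exists_toward hG hzb
    have e1 := dist_sym G z b
    have e2 := dist_sym G z' b
    have e3 := dist_sym G z' x
    have e4 := dist_sym G z x
    have t1 := dist_tri hG x b z'
    have t2 := dist_tri hG x z' z
    have a1 := SimpleGraph.dist_eq_one_iff_adj.2 hxb
    have a2 := SimpleGraph.dist_eq_one_iff_adj.2 hz'.symm
    have h3 := ih z' (by omega) (by omega)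
    rcases dist_adj hG y hz' with h | h
    · omega
    · exfalso
      have hz'x : z' ≠ x := by rintro rfl; simp at e3; omega
      obtain ⟨z'', hz'', hz''x⟩ := exists_toward hG hz'x
      have t3 := dist_tri hG z'' x y
      have t4 := dist_adj hG y hz''
      have := toward_unique hG hz'.symm hz'' (y := y) (by omega) (by omega)
      subst this
      omega

/-- A vertex between `x` and `y` is also between `w` and one of them. -/
theorem btw_or (hG : G.IsTree) {x y m : V} (h : G.dist x m + G.dist m y = G.dist x y) (w : V) :
    G.dist x m + G.dist m w = G.dist x w ∨ G.dist y m + G.dist m w = G.dist y w := by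
  by_cases hx : m = x
  · subst hx; left; simp
  by_cases hy : m = y
  · subst hy; right; simp
  by_cases hw : m = w
  · subst hw; left; simp
  obtain ⟨a, ha, ha'⟩ := exists_toward hG hx
  obtain ⟨b, hb, hb'⟩ := exists_toward hG hy
  obtain ⟨c, hc, hc'⟩ := exists_toward hG hw
  have e1 := dist_sym G x m
  have e2 := dist_sym G y m
  have e3 := dist_sym G x a
  have e4 := dist_sym G w x
  have e5 := dist_sym G w y
  have t := dist_tri hG x a y
  have hab : a ≠ b := by rintro rfl; omega
  by_cases hac : a = c
  · right
    have := dist_add_of_toward_ne hG hb hb' hc (by rintro rfl; exact hab hac) (G.dist c w) w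
      (by omega) rfl
    omega
  · left
    have := dist_add_of_toward_ne hG ha ha' hc hac (G.dist c w) w (by omega) rfl
    omega

theorem exists_median (hG : G.IsTree) (x y z : V) :
    ∃ m, G.dist x m + G.dist m y = G.dist x y ∧ G.dist x m + G.dist m z = G.dist x z ∧
      G.dist y m + G.dist m z = G.dist y z := by
  induction hn : G.dist x y generalizing x with
  | zero =>
    obtain rfl := eq_of_dist_zero hG hn
    exact ⟨x, by simp⟩
  | succ n ih =>
    have hxy : x ≠ y := by rintro rfl; simp at hn
    by_cases hxz : x = z
    · subst hxz
      exact ⟨x, by simp [hn]⟩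
    obtain ⟨a, ha, ha'⟩ := exists_toward hG hxy
    obtain ⟨b, hb, hb'⟩ := exists_toward hG hxz
    by_cases hab : a = b
    · subst hab
      obtain ⟨m, h1, h2, h3⟩ := ih a (by omega)
      have t1 := dist_tri hG x a m
      have t2 := dist_tri hG x m y
      have t3 := dist_tri hG x m z
      have a1 := SimpleGraph.dist_eq_one_iff_adj.2 ha
      exact ⟨m, by omega, by omega, h3⟩
    · have := dist_add_of_toward_ne hG ha ha' hb hab (G.dist b z) z (by omega) rfl
      have e1 := dist_sym G y x
      have e2 := dist_sym G z y
      exact ⟨x, by simp [hn], by simp, by omega⟩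

/-- The four-point condition: trees are `0`-hyperbolic. -/
theorem four_pt (hG : G.IsTree) (x y z w : V) :
    G.dist x y + G.dist z w ≤ G.dist x z + G.dist y w ∨
      G.dist x y + G.dist z w ≤ G.dist x w + G.dist y z := by
  obtain ⟨m, h1, h2, h3⟩ := exists_median hG x y z
  have a1 := btw_or hG h1 w
  have a2 := btw_or hG h2 w
  have a3 := btw_or hG h3 w
  have t1 := dist_tri hG x m w
  have t2 := dist_tri hG y m w
  have t3 := dist_tri hG z m w
  have e1 := dist_sym G y m
  have e2 := dist_sym G z m
  omega

theorem exists_pt (hG : G.IsTree) (x y : V) {n : ℕ} (h : n ≤ G.dist x y) :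
    ∃ p, G.dist x p = n ∧ G.dist x p + G.dist p y = G.dist x y := by
  induction n with
  | zero => exact ⟨x, by simp⟩
  | succ n ih =>
    obtain ⟨p, h1, h2⟩ := ih (by omega)
    have hp : p ≠ y := by rintro rfl; simp at h2; omega
    obtain ⟨q, hq, hq'⟩ := exists_toward hG hp
    have t1 := dist_tri hG x p q
    have t2 := dist_tri hG x q y
    have a1 := SimpleGraph.dist_eq_one_iff_adj.2 hq
    exact ⟨q, by omega, by omega⟩

/-- Points of a geodesic are ordered by their distance to its origin. -/
theorem dist_of_btw (hG : G.IsTree) {x y p q : V} (hp : G.dist x p + G.dist p y = G.dist x y)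
    (hq : G.dist x q + G.dist q y = G.dist x y) (h : G.dist x p ≤ G.dist x q) :
    G.dist x p + G.dist p q = G.dist x q := by
  have f := four_pt hG x y p q
  have e1 := dist_sym G p y
  have e2 := dist_sym G q y
  have t1 := dist_tri hG x p q
  omega

theorem btw_unique (hG : G.IsTree) {x y p q : V} (hp : G.dist x p + G.dist p y = G.dist x y)
    (hq : G.dist x q + G.dist q y = G.dist x y) (h : G.dist x p = G.dist x q) : p = q := by
  have := dist_of_btw hG hp hq h.le
  exact eq_of_dist_zero hG (by omega)

/-- Two overlapping geodesics concatenate to a geodesic. -/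
theorem btw_concat (hG : G.IsTree) {x y z w : V} (h1 : G.dist x y + G.dist y z = G.dist x z)
    (h2 : G.dist y z + G.dist z w = G.dist y w) (h : y ≠ z) :
    G.dist x z + G.dist z w = G.dist x w := by
  have f := four_pt hG x z y w
  have e1 := dist_sym G z y
  have t1 := dist_tri hG x z w
  have := dist_pos hG h
  omega

end TreeMetric

/-! ### The group `G⁺` -/

section Plus

variable {G : SimpleGraph V}

theorem dist_le_of_aut (hG : G.IsTree) {π : Equiv.Perm V} (h : π ∈ autGroup G) (x y : V) :
    G.dist (π x) (π y) ≤ G.dist x y := by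
  obtain ⟨p, hp⟩ := hG.connected.exists_walk_length_eq_dist x y
  let f : G →g G := ⟨π, fun {a b} hab => (h a b).2 hab⟩
  have h1 := SimpleGraph.dist_le (p.map f)
  rw [SimpleGraph.Walk.length_map, hp] at h1
  exact h1

theorem dist_aut (hG : G.IsTree) {π : Equiv.Perm V} (h : π ∈ autGroup G) (x y : V) :
    G.dist (π x) (π y) = G.dist x y := by
  refine le_antisymm (dist_le_of_aut hG h x y) ?_
  have := dist_le_of_aut hG (inv_mem h) (π x) (π y)
  simpa using this

theorem plus_le (G : SimpleGraph V) (H : Subgroup (Equiv.Perm V)) : plusGroup G H ≤ H :=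
  (Subgroup.closure_le _).2 fun _ h => h.1

theorem plus_normal {H : Subgroup (Equiv.Perm V)} (hH : H ≤ autGroup G) {h γ : Equiv.Perm V}
    (hh : h ∈ H) (hγ : γ ∈ plusGroup G H) : h * γ * h⁻¹ ∈ plusGroup G H := by
  refine Subgroup.closure_induction (p := fun γ _ => h * γ * h⁻¹ ∈ plusGroup G H)
    ?_ ?_ ?_ ?_ hγ
  · rintro γ ⟨h1, x, y, h2, h3, h4⟩
    refine Subgroup.subset_closure ⟨H.mul_mem (H.mul_mem hh h1) (H.inv_mem hh), h x, h y,
      (hH hh x y).2 h2, ?_, ?_⟩ <;> simp [h3, h4]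
  · simp [one_mem]
  · intro a b _ _ ha hb
    have := mul_mem ha hb
    simpa [mul_assoc] using this
  · intro a _ ha
    have := inv_mem ha
    simpa [mul_assoc] using this

end Plus

/-! ### Minimality of normal subgroups -/

section Minimal

variable {G : SimpleGraph V}

/-- `C` is (the vertex set of) a nonempty `Γ`-invariant subtree. -/
def InvSubtree (G : SimpleGraph V) (Γ : Subgroup (Equiv.Perm V)) (C : Set V) : Prop :=
  C.Nonempty ∧ GeodClosed G C ∧ ∀ γ ∈ Γ, ∀ x ∈ C, γ x ∈ C

/-- The nearest point of a subtree lies on every geodesic into that subtree. -/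
theorem exists_gate (hG : G.IsTree) {C : Set V} (hne : C.Nonempty) (hC : GeodClosed G C)
    (x : V) : ∃ p ∈ C, ∀ c ∈ C, G.dist x p + G.dist p c = G.dist x c := by
  obtain ⟨p, hp, hmin⟩ := WellFounded.has_min (measure (fun c => G.dist x c)).wf C hne
  refine ⟨p, hp, fun c hc => ?_⟩
  obtain ⟨m, h1, h2, h3⟩ := exists_median hG x p c
  have hm : m ∈ C := hC p hp c hc m h3
  have h4 : ¬ G.dist x m < G.dist x p := hmin m hm
  have : m = p := eq_of_dist_zero hG (by omega)
  rwa [this] at h2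

theorem inv_of_image {H : Subgroup (Equiv.Perm V)} {S : Set V}
    (h : ∀ π ∈ H, ∀ x ∈ S, π x ∈ S) : ∀ π ∈ H, π '' S = S := by
  intro π hπ
  apply Set.Subset.antisymm
  · rintro _ ⟨x, hx, rfl⟩
    exact h π hπ x hx
  · intro x hx
    exact ⟨π⁻¹ x, h _ (inv_mem hπ) x hx, by simp⟩

variable {H Γ : Subgroup (Equiv.Perm V)}

/-- A nontrivial normal subgroup fixes no vertex, as its fixed-point set is a subtree invariant
under `H`. -/
theorem no_fixed_point (hG : G.IsTree) (hΓ : Γ ≤ autGroup G)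
    (hN : ∀ h ∈ H, ∀ γ ∈ Γ, h * γ * h⁻¹ ∈ Γ) (hsub : NoInvariantSubtree G H) (hnt : Γ ≠ ⊥)
    (p : V) : ¬ ∀ γ ∈ Γ, γ p = p := by
  intro hp
  apply hsub
  refine ⟨{x | ∀ γ ∈ Γ, γ x = x}, ⟨p, hp⟩, ?_, ?_, ?_⟩
  · intro huniv
    apply hnt
    rw [Subgroup.eq_bot_iff_forall]
    intro γ hγ
    ext x
    have : x ∈ {x | ∀ γ ∈ Γ, γ x = x} := huniv ▸ Set.mem_univ x
    exact this γ hγ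
  · intro x hx y hy z hz γ hγ
    have h1 := dist_aut hG (hΓ hγ) x z
    have h2 := dist_aut hG (hΓ hγ) z y
    rw [hx γ hγ] at h1
    rw [hy γ hγ] at h2
    unfold OnGeodesic at hz
    exact btw_unique hG (x := x) (y := y) (by omega) hz h1
  · apply inv_of_image
    intro π hπ x hx γ hγ
    have := hN π⁻¹ (inv_mem hπ) γ hγ
    have h1 := hx _ this
    simp only [inv_inv, Equiv.Perm.mul_apply] at h1
    exact (Equiv.Perm.inv_eq_iff_eq.1 h1).symm ▸ rfl

/-- Two invariant subtrees meet: otherwise the bridge between them would be fixed. -/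
theorem InvSubtree.inter (hG : G.IsTree) (hΓ : Γ ≤ autGroup G)
    (hfix : ∀ p : V, ¬ ∀ γ ∈ Γ, γ p = p) {C C' : Set V} (hC : InvSubtree G Γ C)
    (hC' : InvSubtree G Γ C') : InvSubtree G Γ (C ∩ C') := by
  refine ⟨?_, fun x hx y hy z hz => ⟨hC.2.1 x hx.1 y hy.1 z hz, hC'.2.1 x hx.2 y hy.2 z hz⟩,
    fun γ hγ x hx => ⟨hC.2.2 γ hγ x hx.1, hC'.2.2 γ hγ x hx.2⟩⟩
  by_contra hemp
  have hdisj : ∀ x ∈ C, x ∉ C' := fun x h1 h2 => hemp ⟨x, h1, h2⟩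
  obtain ⟨x0, hx0⟩ := hC'.1
  -- the gate of a point of `C'` in `C`, then back: this gives the bridge `[p, q]`
  obtain ⟨p, hp, hpg⟩ := exists_gate hG hC.1 hC.2.1 x0
  obtain ⟨q, hq, hqg⟩ := exists_gate hG hC'.1 hC'.2.1 p
  apply hfix p
  intro γ hγ
  have hpq : p ≠ q := fun h => hdisj p hp (h ▸ hq)
  have pos := dist_pos hG hpq
  have h1 := hqg x0 hx0
  have h2 := hqg (γ q) (hC'.2.2 γ hγ q hq)
  have h3 := hpg (γ p) (hC.2.2 γ hγ p hp)
  have h4 := dist_aut hG (hΓ hγ) p q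
  have f1 := four_pt hG p (γ q) q (γ p)
  have f2 := four_pt hG x0 (γ p) p q
  have t1 := dist_tri hG q p (γ p)
  have e1 := dist_sym G x0 p
  have e2 := dist_sym G x0 q
  have e3 := dist_sym G (γ p) p
  have e4 := dist_sym G (γ p) q
  have e5 := dist_sym G (γ q) (γ p)
  have e6 := dist_sym G (γ q) q
  refine (eq_of_dist_zero hG ?_).symm
  omega

/-- `y` lies on the ray from `x` towards the end defined by the invariant subtrees of `Γ`. -/
def TowardEnd (G : SimpleGraph V) (Γ : Subgroup (Equiv.Perm V)) (x y : V) : Prop :=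
  ∃ C, InvSubtree G Γ C ∧ ∀ c ∈ C, G.dist x y + G.dist y c = G.dist x c

theorem InvSubtree.image (hG : G.IsTree) (hH : H ≤ autGroup G)
    (hN : ∀ h ∈ H, ∀ γ ∈ Γ, h * γ * h⁻¹ ∈ Γ) {C : Set V} (hC : InvSubtree G Γ C)
    {π : Equiv.Perm V} (hπ : π ∈ H) : InvSubtree G Γ (π '' C) := by
  refine ⟨hC.1.image _, ?_, ?_⟩
  · rintro _ ⟨x, hx, rfl⟩ _ ⟨y, hy, rfl⟩ z hz
    refine ⟨π⁻¹ z, hC.2.1 x hx y hy _ ?_, by simp⟩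
    unfold OnGeodesic at hz ⊢
    have h1 := dist_aut hG (hH hπ) x (π⁻¹ z)
    have h2 := dist_aut hG (hH hπ) (π⁻¹ z) y
    have h3 := dist_aut hG (hH hπ) x y
    rw [show π (π⁻¹ z) = z by simp] at h1 h2
    omega
  · rintro γ hγ _ ⟨x, hx, rfl⟩
    have := hN π⁻¹ (inv_mem hπ) γ hγ
    exact ⟨_, hC.2.2 _ this x hx, by simp⟩

theorem TowardEnd.unique (hG : G.IsTree) (hΓ : Γ ≤ autGroup G)
    (hfix : ∀ p : V, ¬ ∀ γ ∈ Γ, γ p = p) {x y y' : V} (h : TowardEnd G Γ x y)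
    (h' : TowardEnd G Γ x y') (hle : G.dist x y ≤ G.dist x y') :
    G.dist x y + G.dist y y' = G.dist x y' := by
  obtain ⟨C, hC, h1⟩ := h
  obtain ⟨C', hC', h2⟩ := h'
  obtain ⟨c, hc, hc'⟩ := (hC.inter hG hΓ hfix hC').1
  exact dist_of_btw hG (h1 c hc) (h2 c hc') hle

/-- If the invariant subtrees of `Γ` get arbitrarily far from `x`, then they converge to an end,
which is stabilized by `H`. -/
theorem exists_end (hG : G.IsTree) (hH : H ≤ autGroup G) (hΓ : Γ ≤ autGroup G)
    (hN : ∀ h ∈ H, ∀ γ ∈ Γ, h * γ * h⁻¹ ∈ Γ) (hfix : ∀ p : V, ¬ ∀ γ ∈ Γ, γ p = p) (x : V)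
    (hfar : ∀ n : ℕ, ∃ C, InvSubtree G Γ C ∧ ∀ c ∈ C, n ≤ G.dist x c) :
    ∃ r : ℕ → V, IsRay G r ∧ StabilizesEnd G H r := by
  have hex : ∀ n : ℕ, ∃ y, G.dist x y = n ∧ TowardEnd G Γ x y := by
    intro n
    obtain ⟨C, hC, hn⟩ := hfar n
    obtain ⟨p, hp, hg⟩ := exists_gate hG hC.1 hC.2.1 x
    obtain ⟨y, h1, h2⟩ := exists_pt hG x p (hn p hp)
    refine ⟨y, h1, C, hC, fun c hc => ?_⟩
    have h3 := hg c hc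
    have t1 := dist_tri hG x y c
    have t2 := dist_tri hG y p c
    omega
  choose r hr1 hr2 using hex
  have hrange : ∀ y, TowardEnd G Γ x y → y ∈ Set.range r := by
    intro y hy
    refine ⟨G.dist x y, ?_⟩
    have := (hr2 (G.dist x y)).unique hG hΓ hfix hy (hr1 _).le
    rw [hr1] at this
    exact eq_of_dist_zero hG (by omega)
  refine ⟨r, ⟨fun n m h => ?_, fun n => ?_⟩, ?_⟩
  · rw [← hr1 n, ← hr1 m, h]
  · have := (hr2 n).unique hG hΓ hfix (hr2 (n + 1)) (by rw [hr1, hr1]; omega)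
    rw [hr1, hr1] at this
    exact SimpleGraph.dist_eq_one_iff_adj.1 (by omega)
  · intro π hπ r' _ hinf
    unfold SameEnd at hinf ⊢
    have hfin : (r '' Set.Iio (G.dist x (π x))).Finite := (Set.finite_Iio _).image _
    have h1 := (hinf.sdiff hfin).image (π.injective.injOn)
    refine h1.mono ?_
    rintro _ ⟨_, ⟨⟨⟨k, rfl⟩, ⟨n, hn⟩⟩, hnot⟩, rfl⟩
    refine ⟨⟨k, rfl⟩, hrange _ ?_⟩
    rw [← hn] at hnot ⊢
    have hle : G.dist x (π x) ≤ n := by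
      by_contra hlt
      exact hnot ⟨n, by simpa using hlt, rfl⟩
    obtain ⟨C, hC, hc⟩ := hr2 n
    refine ⟨π '' C, hC.image hG hH hN hπ, ?_⟩
    rintro _ ⟨c, hcC, rfl⟩
    have h2 := hc c hcC
    have h3 := dist_aut hG (hH hπ) x (r n)
    have h4 := dist_aut hG (hH hπ) (r n) c
    have h5 := dist_aut hG (hH hπ) x c
    have h6 := hr1 n
    have f := four_pt hG x (π (r n)) (π x) (π c)
    have e := dist_sym G (π (r n)) (π x)
    have t := dist_tri hG x (π (r n)) (π c)
    by_cases h0 : G.dist x (π (r n)) = 0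
    · have := eq_of_dist_zero hG h0
      rw [← this]; simp
    · omega

/-- A nontrivial normal subgroup `Γ` of `H` has no proper invariant subtree: the intersection of
all `Γ`-invariant subtrees is invariant under `H`, and it is nonempty unless they converge
to an end. -/
theorem inv_subtree_eq_univ (hG : G.IsTree) (hH : H ≤ autGroup G) (hΓ : Γ ≤ autGroup G)
    (hN : ∀ h ∈ H, ∀ γ ∈ Γ, h * γ * h⁻¹ ∈ Γ) (hsub : NoInvariantSubtree G H)
    (hend : NoStabilizedEnd G H) (hnt : Γ ≠ ⊥) {C : Set V} (hC : InvSubtree G Γ C) :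
    C = Set.univ := by
  have hfix := no_fixed_point hG hΓ hN hsub hnt
  obtain ⟨x, -⟩ := hC.1
  by_cases hfar : ∀ n : ℕ, ∃ C, InvSubtree G Γ C ∧ ∀ c ∈ C, n ≤ G.dist x c
  · exact absurd (exists_end hG hH hΓ hN hfix x hfar) hend
  push Not at hfar
  -- an invariant subtree as far from `x` as possible: its gate lies in all invariant subtrees
  obtain ⟨n, hn, hmin⟩ : ∃ n : ℕ, (∀ C, InvSubtree G Γ C → ∃ c ∈ C, G.dist x c < n) ∧
      ∀ m < n, ¬ ∀ C, InvSubtree G Γ C → ∃ c ∈ C, G.dist x c < m := by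
    classical
    exact ⟨Nat.find hfar, Nat.find_spec hfar, fun m hm => Nat.find_min hfar hm⟩
  have hnpos : 0 < n := by
    obtain ⟨c, -, hc⟩ := hn C hC
    omega
  have h1 := hmin (n - 1) (by omega)
  push Not at h1
  obtain ⟨C₀, hC₀, hfar₀⟩ := h1
  obtain ⟨p, hp, hg⟩ := exists_gate hG hC₀.1 hC₀.2.1 x
  have hpall : ∀ C, InvSubtree G Γ C → p ∈ C := by
    intro C hC
    obtain ⟨c, ⟨hc0, hc1⟩, hlt⟩ := hn _ (hC₀.inter hG hΓ hfix hC)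
    have h2 := hg c hc0
    have h3 := hfar₀ p hp
    have : p = c := eq_of_dist_zero hG (by omega)
    rwa [this]
  by_contra hne
  apply hsub
  refine ⟨{z | ∀ C, InvSubtree G Γ C → z ∈ C}, ⟨p, hpall⟩, ?_, ?_, ?_⟩
  · intro huniv
    apply hne
    rw [Set.eq_univ_iff_forall] at huniv ⊢
    exact fun z => huniv z C hC
  · intro a ha b hb z hz C hC
    exact hC.2.1 a (ha C hC) b (hb C hC) z hz
  · apply inv_of_image
    intro π hπ z hz C hC
    obtain ⟨w, hw, hw'⟩ := hz _ (hC.image hG hH hN (inv_mem hπ))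
    rw [← hw']
    simpa using hw

/-- Every half-tree meets every `Γ`-orbit. -/
theorem half_tree_meets (hG : G.IsTree) (hΓ : Γ ≤ autGroup G)
    (huniv : ∀ C, InvSubtree G Γ C → C = Set.univ) (v : V) {a b : V} (hab : G.Adj a b) :
    ∃ γ ∈ Γ, G.dist b (γ v) + 1 = G.dist a (γ v) := by
  by_contra hno
  push Not at hno
  -- the convex hull of the orbit
  have hinv : InvSubtree G Γ {z | ∀ S, GeodClosed G S → (∀ γ ∈ Γ, γ v ∈ S) → z ∈ S} := by
    refine ⟨⟨v, fun S _ hv => by simpa using hv 1 (one_mem _)⟩, ?_, ?_⟩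
    · intro x hx y hy z hz S hS hv
      exact hS x (hx S hS hv) y (hy S hS hv) z hz
    · intro γ hγ z hz S hS hv
      have := hz (γ ⁻¹' S) ?_ ?_
      · exact this
      · intro x hx y hy w hw
        refine hS _ hx _ hy _ ?_
        unfold OnGeodesic at hw ⊢
        rwa [dist_aut hG (hΓ hγ), dist_aut hG (hΓ hγ), dist_aut hG (hΓ hγ)]
      · intro δ hδ
        exact hv (γ * δ) (mul_mem hγ hδ)
  have hb : b ∈ {z | ∀ S, GeodClosed G S → (∀ γ ∈ Γ, γ v ∈ S) → z ∈ S} := by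
    rw [huniv _ hinv]; trivial
  have hb' := hb {z | G.dist a z + 1 = G.dist b z} ?_ ?_
  · have : G.dist a b + 1 = G.dist b b := hb'
    simp at this
  · intro x hx y hy z hz
    have hx' : G.dist a x + 1 = G.dist b x := hx
    have hy' : G.dist a y + 1 = G.dist b y := hy
    change G.dist a z + 1 = G.dist b z
    unfold OnGeodesic at hz
    rcases dist_adj hG z hab with h | h
    · exfalso
      have f := four_pt hG a z x y
      have f1 := four_pt hG b z x y
      have e1 := dist_sym G z x
      have e2 := dist_sym G b y
      have g := btw_or hG hz a
      have g' := btw_or hG hz b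
      have e3 := dist_sym G a x
      have e4 := dist_sym G b x
      have e5 := dist_sym G a y
      have e6 := dist_sym G z a
      have e7 := dist_sym G z b
      have e8 := dist_sym G y z
      have t1 := dist_tri hG a z x
      have t2 := dist_tri hG a z y
      have t3 := dist_tri hG b z x
      have t4 := dist_tri hG b z y
      omega
    · exact h.symm
  · intro γ hγ
    have := hno γ hγ
    rcases dist_adj hG (γ v) hab with h | h
    · exact absurd h.symm this
    · exact h.symm

end Minimal

/-! ### Potentials of invariant cocycles -/

section Potential

variable {G : SimpleGraph V}

/-- On a tree every antisymmetric function on edges is the differential of a function on vertices. -/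
theorem exists_potential {M : Type*} [AddCommGroup M] (hG : G.IsTree) (f : V → V → M)
    (hf : ∀ x y, f x y = - f y x) : ∃ Φ : V → M, ∀ x y, G.Adj x y → Φ y = Φ x + f x y := by
  obtain ⟨x0⟩ := hG.connected.nonempty
  have hpar : ∀ x, ∃ w, x ≠ x0 → G.Adj x w ∧ G.dist w x0 + 1 = G.dist x x0 := by
    intro x
    by_cases h : x = x0
    · exact ⟨x, fun h' => absurd h h'⟩
    · obtain ⟨w, hw⟩ := exists_toward hG h
      exact ⟨w, fun _ => hw⟩
  choose par hpar using hpar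
  let F : ℕ → V → M := fun n => Nat.rec (fun _ => 0) (fun _ φ x => φ (par x) + f (par x) x) n
  have key : ∀ x y, G.Adj x y → G.dist y x0 = G.dist x x0 + 1 →
      F (G.dist y x0) y = F (G.dist x x0) x + f x y := by
    intro x y hxy hd
    have hy : y ≠ x0 := by rintro rfl; simp at hd
    obtain ⟨h1, h2⟩ := hpar y hy
    have : par y = x := toward_unique hG h1 hxy.symm h2 hd.symm
    rw [hd]
    change F (G.dist x x0) (par y) + f (par y) y = _
    rw [this]
  refine ⟨fun x => F (G.dist x x0) x, fun x y hxy => ?_⟩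
  rcases dist_adj hG x0 hxy with h | h
  · have := key y x hxy.symm h
    dsimp only
    rw [this, hf x y]
    abel
  · exact key x y hxy h

/-- Since `G⁺` is generated by elements with fixed points, potentials of `G⁺`-invariant
cocycles are `G⁺`-invariant. (Equivalently, the quotient graph of the tree is a tree.) -/
theorem potential_inv {M : Type*} [AddCommGroup M] (hG : G.IsTree)
    {H : Subgroup (Equiv.Perm V)} (f : V → V → M) (Φ : V → M)
    (hΦ : ∀ x y, G.Adj x y → Φ y = Φ x + f x y) (hH : H ≤ autGroup G)
    (hinv : ∀ γ ∈ plusGroup G H, ∀ x y, f (γ x) (γ y) = f x y) :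
    ∀ γ ∈ plusGroup G H, ∀ x, Φ (γ x) = Φ x := by
  intro γ hγ
  refine Subgroup.closure_induction (p := fun γ _ => ∀ x, Φ (γ x) = Φ x) ?_ ?_ ?_ ?_ hγ
  · rintro e he x
    have heΓ : e ∈ plusGroup G H := Subgroup.subset_closure he
    obtain ⟨heH, a, -, -, hea, -⟩ := he
    obtain ⟨p⟩ := hG.connected.preconnected x a
    induction p with
    | nil => rw [hea]
    | @cons u v w huv p ih =>
      have h1 := hΦ u v huv
      have h2 := hΦ (e u) (e v) ((hH heH u v).2 huv)
      rw [ih hea, hinv e heΓ, h1] at h2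
      exact (add_right_cancel h2).symm
  · intro x; rfl
  · intro a b _ _ ha hb x
    rw [Equiv.Perm.mul_apply, ha, hb]
  · intro a _ ha x
    have := ha (a⁻¹ x)
    rw [show a (a⁻¹ x) = x by simp] at this
    exact this.symm

/-- Elements of `G⁺` move vertices by even distances; only this consequence is needed. -/
theorem plus_not_adj (hG : G.IsTree) {H : Subgroup (Equiv.Perm V)} (hH : H ≤ autGroup G)
    {γ : Equiv.Perm V} (hγ : γ ∈ plusGroup G H) (x : V) : ¬ G.Adj x (γ x) := by
  intro h
  obtain ⟨Φ, hΦ⟩ := exists_potential (M := ZMod 2) hG (fun _ _ => 1) (fun _ _ => by decide)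
  have h1 := potential_inv hG (fun _ _ => 1) Φ hΦ hH (fun _ _ _ _ => rfl) γ hγ x
  have h2 := hΦ _ _ h
  rw [h1] at h2
  have : (1 : ZMod 2) = 0 := by simpa using h2.symm
  exact absurd this (by decide)

end Potential

/-! ### Counting quasimorphisms -/

section Counting

variable {G : SimpleGraph V}

/-- A copy of the pattern `P` (a set of directed geodesics of length `L`, given by their
end points) starts at distance `i` from `x` on the geodesic from `x` to `y`. -/
def Occ (G : SimpleGraph V) (P : V → V → Prop) (L : ℕ) (x y : V) (i : ℕ) : Prop :=
  ∃ p q, P p q ∧ G.dist x p = i ∧ G.dist x p + L + G.dist q y = G.dist x y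

open Classical in
/-- The number of copies of the pattern `P` on the directed geodesic from `x` to `y`. -/
noncomputable def cnt (G : SimpleGraph V) (P : V → V → Prop) (L : ℕ) (x y : V) : ℕ :=
  ((Finset.range (G.dist x y + 1)).filter (Occ G P L x y)).card

variable {P : V → V → Prop} {L : ℕ}

/-- Counts are additive along a geodesic, up to the copies of the pattern crossing the cut point. -/
theorem cnt_split (hG : G.IsTree) (hP : ∀ p q, P p q → G.dist p q = L) (hL : 0 < L)
    {x m y : V} (hm : G.dist x m + G.dist m y = G.dist x y) :
    cnt G P L x m + cnt G P L m y ≤ cnt G P L x y ∧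
      cnt G P L x y ≤ cnt G P L x m + cnt G P L m y + L := by
  classical
  have hsub : ((Finset.range (G.dist m y + 1)).filter (Occ G P L m y)).card =
      (((Finset.range (G.dist m y + 1)).filter (Occ G P L m y)).image (· + G.dist x m)).card :=
    (Finset.card_image_of_injective _ (add_left_injective _)).symm
  unfold cnt
  constructor
  · rw [hsub, ← Finset.card_union_of_disjoint]
    · apply Finset.card_le_card
      intro i hi
      simp only [Finset.mem_union, Finset.mem_filter, Finset.mem_image, Finset.mem_range] at hi ⊢
      rcases hi with ⟨h1, p, q, hpq, h2, h3⟩ | ⟨j, ⟨h1, p, q, hpq, h2, h3⟩, rfl⟩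
      · refine ⟨by omega, p, q, hpq, h2, ?_⟩
        have := hP p q hpq
        have t1 := dist_tri hG q m y
        have t2 := dist_tri hG x p y
        have t3 := dist_tri hG p q y
        omega
      · have := hP p q hpq
        have t1 := dist_tri hG x m p
        have t2 := dist_tri hG x p y
        have t3 := dist_tri hG p q y
        exact ⟨by omega, p, q, hpq, by omega, by omega⟩
    · rw [Finset.disjoint_left]
      intro i hi hi'
      simp only [Finset.mem_filter, Finset.mem_image, Finset.mem_range] at hi hi'
      obtain ⟨_, p, q, -, h2, h3⟩ := hi
      obtain ⟨j, -, rfl⟩ := hi'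
      omega
  · rw [hsub]
    have hcard : (Finset.Ico (G.dist x m + 1 - L) (G.dist x m)).card ≤ L := by
      rw [Nat.card_Ico]; omega
    refine le_trans (Finset.card_le_card (t := (((Finset.range (G.dist x m + 1)).filter
      (Occ G P L x m)) ∪ (((Finset.range (G.dist m y + 1)).filter (Occ G P L m y)).image
        (· + G.dist x m))) ∪ Finset.Ico (G.dist x m + 1 - L) (G.dist x m)) ?_) ?_
    · intro i hi
      simp only [Finset.mem_union, Finset.mem_filter, Finset.mem_image, Finset.mem_range,
        Finset.mem_Ico] at hi ⊢
      obtain ⟨h1, p, q, hpq, h2, h3⟩ := hi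
      have hd := hP p q hpq
      have t1 := dist_tri hG x p q
      have t2 := dist_tri hG x q y
      have t3 := dist_tri hG x p y
      have t4 := dist_tri hG p q y
      by_cases hc : i + L ≤ G.dist x m
      · left; left
        have := dist_of_btw hG (x := x) (y := y) (p := q) (q := m) (by omega) hm (by omega)
        exact ⟨by omega, p, q, hpq, h2, by omega⟩
      by_cases hc' : G.dist x m ≤ i
      · left; right
        have := dist_of_btw hG (x := x) (y := y) (p := m) (q := p) hm (by omega) (by omega)
        exact ⟨i - G.dist x m, ⟨by omega, p, q, hpq, by omega, by omega⟩, by omega⟩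
      · right
        omega
    · refine (Finset.card_union_le _ _).trans ?_
      exact Nat.add_le_add (Finset.card_union_le _ _) hcard

/-- The signed count is additive around a triangle up to `3 * L`, by splitting at the median. -/
theorem cnt_tripod (hG : G.IsTree) (hP : ∀ p q, P p q → G.dist p q = L) (hL : 0 < L)
    (x y z : V) : cnt G P L x y + cnt G P L y z + cnt G P L z x ≤
      cnt G P L y x + cnt G P L z y + cnt G P L x z + 3 * L := by
  obtain ⟨m, h1, h2, h3⟩ := exists_median hG x y z
  have e1 := dist_sym G x y
  have e2 := dist_sym G x z
  have e3 := dist_sym G y z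
  have e4 := dist_sym G x m
  have e5 := dist_sym G y m
  have e6 := dist_sym G z m
  have a1 := cnt_split hG hP hL h1
  have a2 := cnt_split hG hP hL h2
  have a3 := cnt_split hG hP hL h3
  have b1 := cnt_split hG hP hL (x := y) (m := m) (y := x) (by omega)
  have b2 := cnt_split hG hP hL (x := z) (m := m) (y := x) (by omega)
  have b3 := cnt_split hG hP hL (x := z) (m := m) (y := y) (by omega)
  omega

theorem cnt_inv (hG : G.IsTree) {γ : Equiv.Perm V} (hγ : γ ∈ autGroup G)
    (hinv : ∀ p q, P (γ p) (γ q) ↔ P p q) (x y : V) :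
    cnt G P L (γ x) (γ y) = cnt G P L x y := by
  classical
  unfold cnt
  rw [dist_aut hG hγ]
  congr 1
  apply Finset.filter_congr
  intro i _
  constructor
  · rintro ⟨p, q, hpq, h1, h2⟩
    refine ⟨γ⁻¹ p, γ⁻¹ q, ?_, ?_, ?_⟩
    · rw [← hinv]; simpa using hpq
    · rw [← dist_aut hG hγ]; simpa using h1
    · rw [← dist_aut hG hγ x, ← dist_aut hG hγ (γ⁻¹ q), ← dist_aut hG hγ x y]; simpa using h2
  · rintro ⟨p, q, hpq, h1, h2⟩
    refine ⟨γ p, γ q, (hinv p q).2 hpq, ?_, ?_⟩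
    · rw [dist_aut hG hγ]; exact h1
    · rw [dist_aut hG hγ, dist_aut hG hγ, dist_aut hG hγ]; exact h2

/-- The counting quasimorphism `γ ↦ cnt x (γ x) - cnt (γ x) x` is bounded on a boundedly
simple `G⁺`: it is uniformly bounded on the conjugates of an element with a fixed point. -/
theorem qm_bound (hG : G.IsTree) {H : Subgroup (Equiv.Perm V)} (hH : H ≤ autGroup G)
    (hbs : IsBoundedlySimple ↥(plusGroup G H)) (hnt : plusGroup G H ≠ ⊥)
    (hP : ∀ p q, P p q → G.dist p q = L) (hL : 0 < L)
    (hinv : ∀ γ ∈ plusGroup G H, ∀ p q, P (γ p) (γ q) ↔ P p q) (x : V) :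
    ∃ B : ℕ, ∀ γ ∈ plusGroup G H, cnt G P L x (γ x) ≤ cnt G P L (γ x) x + B := by
  have hΓ : plusGroup G H ≤ autGroup G := (plus_le G H).trans hH
  have hci : ∀ γ ∈ plusGroup G H, ∀ y z, cnt G P L (γ y) (γ z) = cnt G P L y z :=
    fun γ hγ y z => cnt_inv hG (hΓ hγ) (hinv γ hγ) y z
  have hell : ∀ γ ∈ plusGroup G H, ∀ z, γ z = z →
      cnt G P L x (γ x) ≤ cnt G P L (γ x) x + 3 * L := by
    intro γ hγ z hz
    have h1 := cnt_tripod hG hP hL x (γ x) z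
    have h2 := hci γ hγ z x
    have h3 := hci γ hγ x z
    rw [hz] at h2 h3
    omega
  have hgen : ∃ e ∈ edgeStabilizers G H, e ≠ 1 := by
    by_contra hno
    push Not at hno
    exact hnt (Subgroup.closure_eq_bot_iff.2 fun e he => hno e he)
  obtain ⟨e, he, he1⟩ := hgen
  obtain ⟨N, hN⟩ := hbs
  have heΓ : e ∈ plusGroup G H := Subgroup.subset_closure he
  obtain ⟨-, a, -, -, hea, -⟩ := he
  have hlist : ∀ l : List ↥(plusGroup G H),
      (∀ k ∈ l, ∃ z, (k : Equiv.Perm V) z = z) →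
      cnt G P L x ((l.prod : Equiv.Perm V) x) ≤
        cnt G P L ((l.prod : Equiv.Perm V) x) x + 6 * L * l.length := by
    intro l
    induction l with
    | nil => intro _; simp
    | cons k l ih =>
      intro hk
      obtain ⟨z, hz⟩ := hk k (by simp)
      have h1 := ih fun k' hk' => hk k' (by simp [hk'])
      have h2 := hell k k.2 z hz
      have h3 := cnt_tripod hG hP hL x ((k : Equiv.Perm V) ((l.prod : Equiv.Perm V) x))
        ((k : Equiv.Perm V) x)
      have h4 := hci k k.2 ((l.prod : Equiv.Perm V) x) x
      have h5 := hci k k.2 x ((l.prod : Equiv.Perm V) x)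
      simp only [List.prod_cons, Subgroup.coe_mul, Equiv.Perm.mul_apply, List.length_cons,
        mul_add, mul_one]
      omega
  refine ⟨6 * L * N, fun γ hγ => ?_⟩
  by_cases hγ1 : γ = 1
  · subst hγ1; simp
  obtain ⟨l, hl, hconj, hprod⟩ := hN ⟨e, heΓ⟩ ⟨γ, hγ⟩
    (fun h => he1 (congrArg Subtype.val h)) (fun h => hγ1 (congrArg Subtype.val h))
  have h1 := hlist l ?_
  · rw [hprod] at h1
    have h2 : 6 * L * l.length ≤ 6 * L * N := Nat.mul_le_mul_left _ hl
    simp only at h1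
    omega
  · intro k hk
    obtain ⟨c, hc | hc⟩ := hconj k hk
    · refine ⟨(c : Equiv.Perm V) a, ?_⟩
      rw [hc]; simp [hea]
    · refine ⟨(c : Equiv.Perm V) a, ?_⟩
      have : e.symm a = a := by rw [Equiv.symm_apply_eq, hea]
      rw [hc]; simp [this]

end Counting

/-! ### Itineraries of geodesics through an orbit -/

section Itinerary

variable {G : SimpleGraph V}

/-- `x` lies in the `Γ`-orbit of `v`. -/
def Orb (Γ : Subgroup (Equiv.Perm V)) (v x : V) : Prop := ∃ γ ∈ Γ, γ v = x

/-- The directed edge `(x, y)` lies in the `Γ`-orbit of the directed edge `(v, b)`. -/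
def EdgeOrb (Γ : Subgroup (Equiv.Perm V)) (v b x y : V) : Prop := ∃ γ ∈ Γ, γ v = x ∧ γ b = y

/-- `x` and `y` are distinct points of the orbit of `v`, with no orbit point strictly between. -/
def Cons (G : SimpleGraph V) (Γ : Subgroup (Equiv.Perm V)) (v x y : V) : Prop :=
  Orb Γ v x ∧ Orb Γ v y ∧ x ≠ y ∧
    ∀ z, Orb Γ v z → G.dist x z + G.dist z y = G.dist x y → z = x ∨ z = y

/-- The first edge of the geodesic from `x` to `y` is in the orbit of `(v, b)`. This is the
two-letter alphabet in which geodesics through the orbit of `v` are recorded. -/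
def Letter (G : SimpleGraph V) (Γ : Subgroup (Equiv.Perm V)) (v b x y : V) : Prop :=
  ∃ q, G.Adj x q ∧ G.dist q y + 1 = G.dist x y ∧ EdgeOrb Γ v b x q

variable {Γ : Subgroup (Equiv.Perm V)} {v b : V}

theorem Orb.map {γ : Equiv.Perm V} (hγ : γ ∈ Γ) {x : V} (h : Orb Γ v x) : Orb Γ v (γ x) := by
  obtain ⟨δ, hδ, rfl⟩ := h
  exact ⟨γ * δ, mul_mem hγ hδ, rfl⟩

theorem Orb.trans_exists {x y : V} (hx : Orb Γ v x) (hy : Orb Γ v y) : ∃ γ ∈ Γ, γ x = y := by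
  obtain ⟨δ, hδ, rfl⟩ := hx
  obtain ⟨ε, hε, rfl⟩ := hy
  exact ⟨ε * δ⁻¹, mul_mem hε (inv_mem hδ), by simp⟩

theorem EdgeOrb.map {γ : Equiv.Perm V} (hγ : γ ∈ Γ) {x y : V} (h : EdgeOrb Γ v b x y) :
    EdgeOrb Γ v b (γ x) (γ y) := by
  obtain ⟨δ, hδ, rfl, rfl⟩ := h
  exact ⟨γ * δ, mul_mem hγ hδ, rfl, rfl⟩

theorem edgeOrb_map_iff {γ : Equiv.Perm V} (hγ : γ ∈ Γ) {x y : V} :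
    EdgeOrb Γ v b (γ x) (γ y) ↔ EdgeOrb Γ v b x y := by
  refine ⟨fun h => ?_, EdgeOrb.map hγ⟩
  simpa using h.map (inv_mem hγ)

theorem EdgeOrb.orb {x y : V} (h : EdgeOrb Γ v b x y) : Orb Γ v x := by
  obtain ⟨δ, hδ, h1, -⟩ := h
  exact ⟨δ, hδ, h1⟩

theorem Cons.map (hG : G.IsTree) (hΓ : Γ ≤ autGroup G) {γ : Equiv.Perm V} (hγ : γ ∈ Γ) {x y : V}
    (h : Cons G Γ v x y) : Cons G Γ v (γ x) (γ y) := by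
  obtain ⟨h1, h2, h3, h4⟩ := h
  refine ⟨h1.map hγ, h2.map hγ, fun h => h3 (γ.injective h), fun z hz hb => ?_⟩
  have := h4 (γ⁻¹ z) (hz.map (inv_mem hγ)) (by
    rw [← dist_aut hG (hΓ hγ) x, ← dist_aut hG (hΓ hγ) (γ⁻¹ z), ← dist_aut hG (hΓ hγ) x y]
    simpa using hb)
  rwa [Equiv.Perm.inv_eq_iff_eq, Equiv.Perm.inv_eq_iff_eq] at this

theorem Cons.symm {x y : V} (h : Cons G Γ v x y) : Cons G Γ v y x := by
  obtain ⟨h1, h2, h3, h4⟩ := h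
  refine ⟨h2, h1, h3.symm, fun z hz hb => ?_⟩
  refine (h4 z hz ?_).symm
  rw [dist_sym G x z, dist_sym G z y, dist_sym G x y, add_comm]
  exact hb

theorem letter_iff (hG : G.IsTree) {x y q : V} (hq : G.Adj x q)
    (hd : G.dist q y + 1 = G.dist x y) : Letter G Γ v b x y ↔ EdgeOrb Γ v b x q := by
  constructor
  · rintro ⟨q', h1, h2, h3⟩
    rwa [toward_unique hG hq h1 hd h2]
  · exact fun h => ⟨q, hq, hd, h⟩

theorem letter_map (hG : G.IsTree) (hΓ : Γ ≤ autGroup G) {γ : Equiv.Perm V} (hγ : γ ∈ Γ)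
    {x y : V} : Letter G Γ v b (γ x) (γ y) ↔ Letter G Γ v b x y := by
  have key : ∀ γ ∈ Γ, ∀ x y, Letter G Γ v b x y → Letter G Γ v b (γ x) (γ y) := by
    rintro γ hγ x y ⟨q, h1, h2, h3⟩
    refine ⟨γ q, (hΓ hγ x q).2 h1, ?_, h3.map hγ⟩
    rw [dist_aut hG (hΓ hγ), dist_aut hG (hΓ hγ)]
    exact h2
  refine ⟨fun h => ?_, key γ hγ x y⟩
  simpa using key _ (inv_mem hγ) _ _ h

/-- A path entering `y` and leaving it through edges of different classes does not backtrack. -/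
theorem btw_of_letter (hG : G.IsTree) {x y z : V} (hyx : y ≠ x)
    (h1 : Letter G Γ v b y z) (h2 : ¬ Letter G Γ v b y x) :
    G.dist x y + G.dist y z = G.dist x z := by
  obtain ⟨q, hq, hqz, hE⟩ := h1
  obtain ⟨t, ht, htx⟩ := exists_toward hG hyx
  rw [letter_iff hG ht htx] at h2
  have hne : t ≠ q := fun h => h2 (h ▸ hE)
  have := dist_add_of_toward_ne hG ht htx hq hne (G.dist q z) z hqz.symm rfl
  rw [dist_sym G x z, this, dist_sym G x y]
  omega

/-- A geodesic leaving the orbit of `v` through an edge of class `(v, b)` comes back through an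
edge of the same class: the signed number of edges of this class on it vanishes. -/
theorem Letter.symm_of_cons (hG : G.IsTree) {H : Subgroup (Equiv.Perm V)} (hH : H ≤ autGroup G)
    {x y : V} (hc : Cons G (plusGroup G H) v x y) (hl : Letter G (plusGroup G H) v b x y) :
    Letter G (plusGroup G H) v b y x := by
  classical
  set Γ := plusGroup G H with hΓdef
  let f : V → V → ℤ := fun a c =>
    (if EdgeOrb Γ v b a c then 1 else 0) - (if EdgeOrb Γ v b c a then 1 else 0)
  obtain ⟨Φ, hΦ⟩ := exists_potential hG f (fun a c => by simp [f])
  have hΦinv := potential_inv hG f Φ hΦ hH (by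
    intro γ hγ a c
    simp only [f, edgeOrb_map_iff (Γ := Γ) hγ])
  obtain ⟨γ, hγ, hγxy⟩ := hc.1.trans_exists hc.2.1
  have hxy : Φ y = Φ x := by rw [← hγxy]; exact hΦinv γ hγ x
  have hnadj : ¬ G.Adj x y := by
    have := plus_not_adj hG hH hγ x
    rwa [hγxy] at this
  obtain ⟨q, hq, hqy, hE⟩ := hl
  have hf0 : ∀ a c, ¬ Orb Γ v a → ¬ Orb Γ v c → f a c = 0 := by
    intro a c ha hc'
    have h1 : ¬ EdgeOrb Γ v b a c := fun h => ha h.orb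
    have h2 : ¬ EdgeOrb Γ v b c a := fun h => hc' h.orb
    simp [f, h1, h2]
  have hnot : ∀ z, G.dist x z + G.dist z y = G.dist x y → z ≠ x → z ≠ y → ¬ Orb Γ v z := by
    intro z hz h1 h2 ho
    rcases hc.2.2.2 z ho hz with h | h
    · exact h1 h
    · exact h2 h
  have hconst : ∀ n z, G.dist z x = n → G.dist x z + G.dist z y = G.dist x y → z ≠ x → z ≠ y →
      Φ z = Φ q := by
    intro n
    induction n with
    | zero => intro z hz _ h1 _; exact absurd (eq_of_dist_zero hG hz) h1
    | succ n ih =>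
      intro z hn hz h1 h2
      obtain ⟨z', hz', hd⟩ := exists_toward hG h1
      have t1 := dist_tri hG z' z y
      have t2 := dist_tri hG x z' y
      have a1 := SimpleGraph.dist_eq_one_iff_adj.2 hz'.symm
      have e1 := dist_sym G z' x
      have e2 := dist_sym G z x
      by_cases hx : z' = x
      · subst hx
        have : G.dist z' z' = 0 := by simp
        rw [toward_unique hG hz'.symm hq (y := y) (by omega) hqy]
      · have hy : z' ≠ y := by
          rintro rfl
          have : G.dist z' z' = 0 := by simp
          omega
        have h3 := ih z' (by omega) (by omega) hx hy
        have h4 := hΦ z' z hz'.symm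
        rw [hf0 _ _ (hnot z' (by omega) hx hy) (hnot z hz h1 h2), h3] at h4
        simpa using h4
  obtain ⟨q', hq', hq'x⟩ := exists_toward hG hc.2.2.1.symm
  refine ⟨q', hq', hq'x, ?_⟩
  have b1 := SimpleGraph.dist_eq_one_iff_adj.2 hq
  have b2 := SimpleGraph.dist_eq_one_iff_adj.2 hq'.symm
  have e1 := dist_sym G q' x
  have e2 := dist_sym G y x
  have hqo : ¬ Orb Γ v q := hnot q (by omega) hq.ne' (by rintro rfl; exact hnadj hq)
  have hq'x' : q' ≠ x := by rintro rfl; exact hnadj hq'.symm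
  have hq'o : ¬ Orb Γ v q' := hnot q' (by omega) hq'x' hq'.ne'
  have c1 := hconst _ q' rfl (by omega) hq'x' hq'.ne'
  have c2 := hΦ x q hq
  have c3 := hΦ q' y hq'.symm
  have n1 : ¬ EdgeOrb Γ v b q x := fun h => hqo h.orb
  have n2 : ¬ EdgeOrb Γ v b q' y := fun h => hq'o h.orb
  by_contra hno
  simp only [f, hE, n1, n2, hno, if_true, if_false] at c2 c3
  omega

theorem letter_comm (hG : G.IsTree) {H : Subgroup (Equiv.Perm V)} (hH : H ≤ autGroup G)
    {x y : V} (hc : Cons G (plusGroup G H) v x y) :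
    Letter G (plusGroup G H) v b x y ↔ Letter G (plusGroup G H) v b y x :=
  ⟨fun h => h.symm_of_cons hG hH hc, fun h => h.symm_of_cons hG hH hc.symm⟩

/-- Every edge leaving an orbit point leads to a next orbit point. -/
theorem exists_cons (hG : G.IsTree) (hΓ : Γ ≤ autGroup G)
    (huniv : ∀ C, InvSubtree G Γ C → C = Set.univ) {x q : V} (hx : Orb Γ v x)
    (hq : G.Adj x q) : ∃ y, Cons G Γ v x y ∧ G.dist q y + 1 = G.dist x y := by
  have hne : {y | Orb Γ v y ∧ G.dist q y + 1 = G.dist x y}.Nonempty := by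
    obtain ⟨γ, hγ, h⟩ := half_tree_meets hG hΓ huniv v hq
    exact ⟨γ v, ⟨γ, hγ, rfl⟩, h⟩
  obtain ⟨y, ⟨hy, hqy⟩, hmin⟩ := WellFounded.has_min (measure (fun c => G.dist x c)).wf _ hne
  have hxy : x ≠ y := by rintro rfl; simp at hqy
  refine ⟨y, ⟨hx, hy, hxy, fun z hz hb => ?_⟩, hqy⟩
  by_cases hzx : z = x
  · exact Or.inl hzx
  right
  have h1 := dist_pos hG hzx
  have h2 := dist_sym G z x
  have h3 := SimpleGraph.dist_eq_one_iff_adj.2 hq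
  have h4 := dist_of_btw hG (x := x) (y := y) (p := q) (q := z) (by omega) hb (by omega)
  have h5 : ¬ G.dist x z < G.dist x y := hmin z ⟨hz, by omega⟩
  exact eq_of_dist_zero hG (by omega)

/-- Geodesics through the orbit may be prolonged by any letter, except that two letters `(v, b)`
may not be adjacent; this uses that `v` has two neighbors not equivalent to `b`. -/
theorem exists_next (hG : G.IsTree) (hΓ : Γ ≤ autGroup G)
    (huniv : ∀ C, InvSubtree G Γ C → C = Set.univ) (hvb : G.Adj v b) {w₁ w₂ : V}
    (hw₁ : G.Adj v w₁) (hw₂ : G.Adj v w₂) (hw : w₁ ≠ w₂) (hE₁ : ¬ EdgeOrb Γ v b v w₁)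
    (hE₂ : ¬ EdgeOrb Γ v b v w₂) {x y : V} (hc : Cons G Γ v x y) (β : Bool)
    (hβ : β = true → ¬ Letter G Γ v b y x) :
    ∃ z, Cons G Γ v y z ∧ G.dist x y + G.dist y z = G.dist x z ∧
      (Letter G Γ v b y z ↔ β = true) := by
  obtain ⟨γ, hγ, hγy⟩ := hc.2.1
  cases β with
  | true =>
    have hE : EdgeOrb Γ v b y (γ b) := ⟨γ, hγ, hγy, rfl⟩
    have hadj : G.Adj y (γ b) := by rw [← hγy]; exact (hΓ hγ v b).2 hvb
    obtain ⟨z, hz, hd⟩ := exists_cons hG hΓ huniv hc.2.1 hadj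
    have hl := (letter_iff hG hadj hd).2 hE
    exact ⟨z, hz, btw_of_letter hG hc.2.2.1.symm hl (hβ rfl), by simp [hl]⟩
  | false =>
    obtain ⟨t, ht, htx⟩ := exists_toward hG hc.2.2.1.symm
    obtain ⟨q, hadj, hqE, hqt⟩ : ∃ q, G.Adj y q ∧ ¬ EdgeOrb Γ v b y q ∧ t ≠ q := by
      by_cases h : t = γ w₁
      · refine ⟨γ w₂, ?_, ?_, ?_⟩
        · rw [← hγy]; exact (hΓ hγ v w₂).2 hw₂
        · rw [← hγy, edgeOrb_map_iff hγ]; exact hE₂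
        · rw [h]; exact fun h' => hw (γ.injective h')
      · refine ⟨γ w₁, ?_, ?_, h⟩
        · rw [← hγy]; exact (hΓ hγ v w₁).2 hw₁
        · rw [← hγy, edgeOrb_map_iff hγ]; exact hE₁
    obtain ⟨z, hz, hd⟩ := exists_cons hG hΓ huniv hc.2.1 hadj
    have hb := dist_add_of_toward_ne hG ht htx hadj hqt (G.dist q z) z hd.symm rfl
    refine ⟨z, hz, ?_, by simp [letter_iff hG hadj hd, hqE]⟩
    rw [dist_sym G x z, hb, dist_sym G x y]
    omega

end Itinerary

/-! ### A Brooks-type word and local homogeneity -/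

section Brooks

variable {G : SimpleGraph V}

/-- The periodic word `b a b a a b a a a`, with `true` for the letter `b`. No two letters `b` are
adjacent, and its prefix `b a b a a b` occurs in the word but not in the reversed word. -/
def wordW (n : ℕ) : Bool := decide (n % 9 = 0 ∨ n % 9 = 2 ∨ n % 9 = 5)

theorem wordW_next {n : ℕ} (h : wordW (n + 1) = true) : wordW n = false := by
  simp only [wordW, decide_eq_true_eq, decide_eq_false_iff_not] at *
  omega

theorem wordW_rev (j : ℕ) : ¬ ∀ i < 6, wordW (j + i) = wordW (5 - i) := by
  intro h
  have h0 := h 0 (by omega)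
  have h1 := h 1 (by omega)
  have h2 := h 2 (by omega)
  have h3 := h 3 (by omega)
  have h4 := h 4 (by omega)
  have h5 := h 5 (by omega)
  simp [wordW] at h0 h1 h2 h3 h4 h5
  omega

/-- `o` lists consecutive points of the orbit of `v` along a geodesic ray whose itinerary
is `wordW`. -/
structure Itin (G : SimpleGraph V) (Γ : Subgroup (Equiv.Perm V)) (v b : V) (o : ℕ → V) :
    Prop where
  cons : ∀ i, Cons G Γ v (o i) (o (i + 1))
  letter : ∀ i, Letter G Γ v b (o i) (o (i + 1)) ↔ wordW i = true
  btw : ∀ i, G.dist (o i) (o (i + 1)) + G.dist (o (i + 1)) (o (i + 2)) = G.dist (o i) (o (i + 2))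

variable {Γ : Subgroup (Equiv.Perm V)} {v b : V}

theorem exists_itin (hG : G.IsTree) {H : Subgroup (Equiv.Perm V)} (hH : H ≤ autGroup G)
    (huniv : ∀ C, InvSubtree G (plusGroup G H) C → C = Set.univ) (hvb : G.Adj v b) {w₁ w₂ : V}
    (hw₁ : G.Adj v w₁) (hw₂ : G.Adj v w₂) (hw : w₁ ≠ w₂)
    (hE₁ : ¬ EdgeOrb (plusGroup G H) v b v w₁) (hE₂ : ¬ EdgeOrb (plusGroup G H) v b v w₂) :
    ∃ o, Itin G (plusGroup G H) v b o := by
  have hΓ : plusGroup G H ≤ autGroup G := (plus_le G H).trans hH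
  have hstep : ∀ (n : ℕ) (s : V × V), Cons G (plusGroup G H) v s.1 s.2 →
      (Letter G (plusGroup G H) v b s.1 s.2 ↔ wordW n = true) →
      ∃ z, Cons G (plusGroup G H) v s.2 z ∧
        G.dist s.1 s.2 + G.dist s.2 z = G.dist s.1 z ∧
        (Letter G (plusGroup G H) v b s.2 z ↔ wordW (n + 1) = true) := by
    intro n s hc hl
    refine exists_next hG hΓ huniv hvb hw₁ hw₂ hw hE₁ hE₂ hc _ fun h h' => ?_
    rw [← letter_comm hG hH hc, hl, wordW_next h] at h'
    exact absurd h' (by simp)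
  have h1 : EdgeOrb (plusGroup G H) v b v b := ⟨1, one_mem _, rfl, rfl⟩
  obtain ⟨y, hy, hd⟩ := exists_cons hG hΓ huniv (v := v) ⟨1, one_mem _, rfl⟩ hvb
  let S : ℕ → Type u := fun n => {s : V × V // Cons G (plusGroup G H) v s.1 s.2 ∧
      (Letter G (plusGroup G H) v b s.1 s.2 ↔ wordW n = true)}
  let next : ∀ n, S n → S (n + 1) := fun n s =>
    ⟨(s.1.2, (hstep n s.1 s.2.1 s.2.2).choose),
      (hstep n s.1 s.2.1 s.2.2).choose_spec.1, (hstep n s.1 s.2.1 s.2.2).choose_spec.2.2⟩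
  let s0 : S 0 := ⟨(v, y), hy, by
    rw [letter_iff hG hvb hd]; simp [h1, wordW]⟩
  let st : ∀ n, S n := fun n => Nat.rec s0 next n
  refine ⟨fun n => (st n).1.1, fun i => (st i).2.1, fun i => (st i).2.2, fun i => ?_⟩
  exact (hstep i (st i).1 (st i).2.1 (st i).2.2).choose_spec.2.1

/-- The itinerary can be made periodic under an element of the group. -/
theorem Itin.periodic (hG : G.IsTree) {H : Subgroup (Equiv.Perm V)} (hH : H ≤ autGroup G)
    {o : ℕ → V} (ho : Itin G (plusGroup G H) v b o) :
    ∃ o', Itin G (plusGroup G H) v b o' ∧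
      ∃ γ ∈ plusGroup G H, ∀ i, o' (i + 9) = γ (o' i) := by
  have hΓ : plusGroup G H ≤ autGroup G := (plus_le G H).trans hH
  obtain ⟨γ, hγ, hγo⟩ := (ho.cons 0).1.trans_exists (ho.cons 9).1
  let o' : ℕ → V := fun m => (γ ^ (m / 9)) (o (m % 9))
  have hper : ∀ i, o' (i + 9) = γ (o' i) := by
    intro i
    simp only [o']
    rw [Nat.add_mod_right, Nat.add_div_right _ (by norm_num), pow_succ']
    rfl
  have hle : ∀ i, i ≤ 9 → o' i = o i := by
    intro i hi
    rcases hi.eq_or_lt with rfl | hi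
    · simpa [o'] using hγo
    · simp [o', Nat.mod_eq_of_lt hi, Nat.div_eq_of_lt hi]
  have hW : ∀ i, wordW (i + 9) = wordW i := fun i => by simp [wordW]
  have hcl : ∀ i, Cons G (plusGroup G H) v (o' i) (o' (i + 1)) ∧
      (Letter G (plusGroup G H) v b (o' i) (o' (i + 1)) ↔ wordW i = true) := by
    intro i
    induction i using Nat.strong_induction_on with
    | _ i ih =>
      by_cases hi : i < 9
      · rw [hle i hi.le, hle (i + 1) hi]
        exact ⟨ho.cons i, ho.letter i⟩
      · obtain ⟨j, rfl⟩ : ∃ j, i = j + 9 := ⟨i - 9, by omega⟩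
        rw [show j + 9 + 1 = j + 1 + 9 by ring, hper, hper, hW, letter_map hG hΓ hγ]
        exact ⟨(ih j (by omega)).1.map hG hΓ hγ, (ih j (by omega)).2⟩
  refine ⟨o', ⟨fun i => (hcl i).1, fun i => (hcl i).2, fun i => ?_⟩, γ, hγ, hper⟩
  induction i using Nat.strong_induction_on with
  | _ i ih =>
    by_cases hi : i < 8
    · rw [hle i (by omega), hle (i + 1) (by omega), hle (i + 2) (by omega)]
      exact ho.btw i
    · by_cases hi8 : i = 8
      · -- at the seam the incoming letter differs from the outgoing one
        subst hi8
        refine btw_of_letter hG (hcl 8).1.2.2.1.symm ((hcl 9).2.2 (by decide)) ?_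
        rw [← letter_comm hG hH (hcl 8).1, (hcl 8).2]
        decide
      · obtain ⟨j, rfl⟩ : ∃ j, i = j + 9 := ⟨i - 9, by omega⟩
        rw [show j + 9 + 1 = j + 1 + 9 by ring, show j + 9 + 2 = j + 2 + 9 by ring, hper, hper,
          hper, dist_aut hG (hΓ hγ), dist_aut hG (hΓ hγ), dist_aut hG (hΓ hγ)]
        exact ih j (by omega)

theorem Itin.ne {o : ℕ → V} (ho : Itin G Γ v b o) (i : ℕ) : o i ≠ o (i + 1) := (ho.cons i).2.2.1

theorem Itin.chain (hG : G.IsTree) {o : ℕ → V} (ho : Itin G Γ v b o) (i k : ℕ) :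
    G.dist (o i) (o (i + k)) + G.dist (o (i + k)) (o (i + k + 1)) =
      G.dist (o i) (o (i + k + 1)) := by
  induction k with
  | zero => simp
  | succ k ih => exact btw_concat hG ih (ho.btw (i + k)) (ho.ne _)

theorem Itin.add (hG : G.IsTree) {o : ℕ → V} (ho : Itin G Γ v b o) (i j k : ℕ) :
    G.dist (o i) (o (i + j)) + G.dist (o (i + j)) (o (i + j + k)) =
      G.dist (o i) (o (i + j + k)) := by
  induction k with
  | zero => simp
  | succ k ih =>
    have h1 := ho.chain hG i (j + k)
    have h2 := ho.chain hG (i + j) k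
    rw [← add_assoc] at h1
    rw [← add_assoc]
    omega

theorem Itin.lt (hG : G.IsTree) {o : ℕ → V} (ho : Itin G Γ v b o) {i j : ℕ} (h : i < j) :
    G.dist (o 0) (o i) < G.dist (o 0) (o j) := by
  have hm : StrictMono fun i => G.dist (o 0) (o i) := by
    refine strictMono_nat_of_lt_succ fun n => ?_
    have h1 := ho.chain hG 0 n
    have h2 := dist_pos hG (ho.ne n)
    rw [zero_add] at h1
    show G.dist (o 0) (o n) < _
    omega
  exact hm h

/-- The points of the orbit on `[o 0, o m]` are exactly the `o l` with `l ≤ m`. -/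
theorem Itin.mem_of_btw (hG : G.IsTree) {o : ℕ → V} (ho : Itin G Γ v b o) {z : V}
    (hz : Orb Γ v z) (m : ℕ) (h : G.dist (o 0) z + G.dist z (o m) = G.dist (o 0) (o m)) :
    ∃ l ≤ m, z = o l := by
  induction m with
  | zero =>
    refine ⟨0, le_rfl, ?_⟩
    have : G.dist (o 0) (o 0) = 0 := by simp
    exact (eq_of_dist_zero hG (by omega)).symm
  | succ m ih =>
    have h1 := ho.chain hG 0 m
    rw [zero_add] at h1
    rcases le_total (G.dist (o 0) z) (G.dist (o 0) (o m)) with hle | hle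
    · have h2 := dist_of_btw hG h h1 hle
      obtain ⟨l, hl, rfl⟩ := ih h2
      exact ⟨l, by omega, rfl⟩
    · have h2 := dist_of_btw hG h1 h hle
      rcases (ho.cons m).2.2.2 z hz (by omega) with rfl | rfl
      · exact ⟨m, by omega, rfl⟩
      · exact ⟨m + 1, le_rfl, rfl⟩

/-- No translate of `[o 6, o 0]` lies on the ray, as the reversed pattern does not occur in the
itinerary. -/
theorem Itin.no_reverse (hG : G.IsTree) {H : Subgroup (Equiv.Perm V)} (hH : H ≤ autGroup G)
    {o : ℕ → V} (ho : Itin G (plusGroup G H) v b o) {δ : Equiv.Perm V} (hδ : δ ∈ plusGroup G H)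
    (m : ℕ) (h : G.dist (o 0) (δ (o 6)) + G.dist (δ (o 6)) (δ (o 0)) + G.dist (δ (o 0)) (o m) =
      G.dist (o 0) (o m)) : False := by
  have hΓ : plusGroup G H ≤ autGroup G := (plus_le G H).trans hH
  -- `δ (o (6 - i))` is increasing along `[o 0, o m]`
  have hpos : ∀ i ≤ 6, G.dist (o 0) (δ (o i)) + G.dist (δ (o i)) (o m) = G.dist (o 0) (o m) ∧
      G.dist (o 0) (δ (o i)) = G.dist (o 0) (δ (o 6)) + G.dist (o i) (o 6) := by
    intro i hi
    have e1 := ho.add hG 0 i (6 - i)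
    rw [zero_add, Nat.add_sub_cancel' hi] at e1
    have e2 := dist_aut hG (hΓ hδ) (o 0) (o i)
    have e3 := dist_aut hG (hΓ hδ) (o i) (o 6)
    have e4 := dist_aut hG (hΓ hδ) (o 6) (o 0)
    have s1 := dist_sym G (o 6) (o 0)
    have s2 := dist_sym G (δ (o 6)) (δ (o i))
    have s3 := dist_sym G (δ (o 0)) (δ (o i))
    have t1 := dist_tri hG (o 0) (δ (o 6)) (δ (o i))
    have t2 := dist_tri hG (δ (o i)) (δ (o 0)) (o m)
    have t3 := dist_tri hG (o 0) (δ (o i)) (o m)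
    omega
  have hex : ∀ i ≤ 6, ∃ l ≤ m, δ (o (6 - i)) = o l := fun i hi =>
    ho.mem_of_btw hG ((ho.cons (6 - i)).1.map hδ) m (hpos (6 - i) (by omega)).1
  choose! j hjm hj using hex
  have hsucc : ∀ i < 6, j (i + 1) = j i + 1 := by
    intro i hi
    have h1 := hpos (6 - i) (by omega)
    have h2 := hpos (6 - (i + 1)) (by omega)
    have e1 := ho.chain hG (6 - (i + 1)) 0
    have hc := (ho.cons (6 - (i + 1))).map hG hΓ hδ
    rw [show 6 - (i + 1) + 1 = 6 - i by omega] at hc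
    have e2 := ho.add hG (6 - (i + 1)) 1 i
    rw [show 6 - (i + 1) + 1 = 6 - i by omega, show 6 - i + i = 6 by omega] at e2
    rw [hj i (by omega)] at h1 hc
    rw [hj (i + 1) (by omega)] at h2 hc
    have hp : 0 < G.dist (o (6 - (i + 1))) (o (6 - i)) := by
      refine dist_pos hG ?_
      have := ho.ne (6 - (i + 1))
      rwa [show 6 - (i + 1) + 1 = 6 - i by omega] at this
    have hlt : j i < j (i + 1) := by
      by_contra hge
      rcases (not_lt.1 hge).eq_or_lt with h | h
      · rw [h] at h2; omega
      · have := ho.lt hG h; omega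
    have hb : G.dist (o (j (i + 1))) (o (j i + 1)) + G.dist (o (j i + 1)) (o (j i)) =
        G.dist (o (j (i + 1))) (o (j i)) := by
      have := ho.add hG (j i) 1 (j (i + 1) - (j i + 1))
      rw [Nat.add_sub_cancel' hlt] at this
      rw [dist_sym G (o (j (i + 1))) (o (j i)), dist_sym G (o (j (i + 1))),
        dist_sym G (o (j i + 1)) (o (j i))]
      omega
    rcases hc.2.2.2 _ (ho.cons (j i + 1)).1 hb with h | h
    · by_contra hne
      have := ho.lt hG (show j i + 1 < j (i + 1) by omega)
      rw [h] at this
      exact lt_irrefl _ this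
    · exact absurd h.symm (ho.ne _)
  have hj0 : ∀ i ≤ 6, j i = j 0 + i := by
    intro i
    induction i with
    | zero => simp
    | succ i ih => intro hi; rw [hsucc i (by omega), ih (by omega), add_assoc]
  refine wordW_rev (j 0) fun i hi => ?_
  rw [Bool.eq_iff_iff, ← ho.letter, ← ho.letter, ← hj0 i hi.le, ← hsucc i hi, ← hj i hi.le,
    ← hj (i + 1) hi, letter_map hG hΓ hδ, letter_comm hG hH (ho.cons (5 - i)),
    show 6 - (i + 1) = 5 - i by omega, show 6 - i = 5 - i + 1 by omega]

/-- If some edge at `v` is inequivalent to two others, the counting quasimorphism of the pattern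
`b a b a a b` is unbounded, so the group is not boundedly simple. -/
theorem brooks_false (hG : G.IsTree) {H : Subgroup (Equiv.Perm V)} (hH : H ≤ autGroup G)
    (hbs : IsBoundedlySimple ↥(plusGroup G H)) (hnt : plusGroup G H ≠ ⊥)
    (huniv : ∀ C, InvSubtree G (plusGroup G H) C → C = Set.univ) (hvb : G.Adj v b) {w₁ w₂ : V}
    (hw₁ : G.Adj v w₁) (hw₂ : G.Adj v w₂) (hw : w₁ ≠ w₂)
    (hE₁ : ¬ EdgeOrb (plusGroup G H) v b v w₁) (hE₂ : ¬ EdgeOrb (plusGroup G H) v b v w₂) :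
    False := by
  classical
  have hΓ : plusGroup G H ≤ autGroup G := (plus_le G H).trans hH
  obtain ⟨o₁, ho₁⟩ := exists_itin hG hH huniv hvb hw₁ hw₂ hw hE₁ hE₂
  obtain ⟨o, ho, γ, hγ, hper⟩ := ho₁.periodic hG hH
  have hpow : ∀ t i, o (9 * t + i) = (γ ^ t) (o i) := by
    intro t
    induction t with
    | zero => simp
    | succ t ih =>
      intro i
      rw [show 9 * (t + 1) + i = 9 * t + i + 9 by ring, hper, ih, pow_succ']
      rfl
  let P : V → V → Prop := fun p q => ∃ δ ∈ plusGroup G H, δ (o 0) = p ∧ δ (o 6) = q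
  have hP : ∀ p q, P p q → G.dist p q = G.dist (o 0) (o 6) := by
    rintro p q ⟨δ, hδ, rfl, rfl⟩
    exact dist_aut hG (hΓ hδ) _ _
  have hL : 0 < G.dist (o 0) (o 6) := by
    have := ho.lt hG (show 0 < 6 by norm_num)
    omega
  have hmap : ∀ γ ∈ plusGroup G H, ∀ p q, P p q → P (γ p) (γ q) := by
    rintro γ hγ p q ⟨δ, hδ, rfl, rfl⟩
    exact ⟨γ * δ, mul_mem hγ hδ, rfl, rfl⟩
  obtain ⟨B, hB⟩ := qm_bound hG hH hbs hnt hP hL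
    (fun γ hγ p q => ⟨fun h => by simpa using hmap _ (inv_mem hγ) _ _ h, hmap γ hγ p q⟩) (o 0)
  have hB := hB (γ ^ (B + 1)) (pow_mem hγ _)
  have hend : (γ ^ (B + 1)) (o 0) = o (9 * (B + 1)) := (hpow (B + 1) 0).symm
  rw [hend] at hB
  have hback : cnt G P (G.dist (o 0) (o 6)) (o (9 * (B + 1))) (o 0) = 0 := by
    unfold cnt
    rw [Finset.card_eq_zero, Finset.filter_eq_empty_iff]
    rintro i - ⟨p, q, ⟨δ, hδ, rfl, rfl⟩, -, h⟩
    refine ho.no_reverse hG hH hδ (9 * (B + 1)) ?_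
    have e := dist_aut hG (hΓ hδ) (o 0) (o 6)
    rw [dist_sym G (δ (o 6)) (δ (o 0)), dist_sym G (δ (o 0)) (o _), dist_sym G (o 0) (δ _),
      dist_sym G (o 0) (o (9 * (B + 1)))]
    omega
  have hforw : B + 1 ≤ cnt G P (G.dist (o 0) (o 6)) (o 0) (o (9 * (B + 1))) := by
    have hcard : ((Finset.range (B + 1)).image fun t => G.dist (o 0) (o (9 * t))).card = B + 1 := by
      rw [Finset.card_image_of_injective, Finset.card_range]
      refine StrictMono.injective fun s t hst => ?_
      exact ho.lt hG (by omega)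
    unfold cnt
    refine hcard.symm.le.trans (Finset.card_le_card fun i hi => ?_)
    obtain ⟨t, ht, rfl⟩ := Finset.mem_image.1 hi
    rw [Finset.mem_range] at ht
    have e1 := ho.add hG 0 (9 * t) (9 * (B + 1) - 9 * t)
    have e2 := ho.add hG (9 * t) 6 (9 * (B + 1) - 9 * t - 6)
    rw [zero_add, show 9 * t + (9 * (B + 1) - 9 * t) = 9 * (B + 1) by omega] at e1
    rw [show 9 * t + 6 + (9 * (B + 1) - 9 * t - 6) = 9 * (B + 1) by omega] at e2
    have e3 := dist_aut hG (hΓ (pow_mem hγ t)) (o 0) (o 6)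
    have p0 := hpow t 0
    have p6 := hpow t 6
    rw [add_zero] at p0
    rw [← p0, ← p6] at e3
    refine Finset.mem_filter.2 ⟨Finset.mem_range.2 (by omega), o (9 * t), o (9 * t + 6),
      ⟨γ ^ t, pow_mem hγ t, p0.symm, p6.symm⟩, rfl, by omega⟩
  omega

/-- At a ramification point `v`, the stabilizer of `v` is transitive on the neighbors of `v`. -/
theorem ram_homogeneous (hG : G.IsTree) {H : Subgroup (Equiv.Perm V)} (hH : H ≤ autGroup G)
    (hbs : IsBoundedlySimple ↥(plusGroup G H)) (hnt : plusGroup G H ≠ ⊥)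
    (huniv : ∀ C, InvSubtree G (plusGroup G H) C → C = Set.univ) (hv : IsRamification G v)
    {a b : V} (ha : G.Adj v a) (hb : G.Adj v b) : ∃ g ∈ plusGroup G H, g v = v ∧ g a = b := by
  by_contra hno
  have hab : ¬ EdgeOrb (plusGroup G H) v a v b := hno
  have hne : a ≠ b := by rintro rfl; exact hno ⟨1, one_mem _, rfl, rfl⟩
  obtain ⟨c, hc, hca, hcb⟩ : ∃ c, G.Adj v c ∧ c ≠ a ∧ c ≠ b := by
    obtain ⟨x, y, z, h1, h2, h3, hx, hy, hz⟩ := hv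
    by_cases hxab : x ≠ a ∧ x ≠ b
    · exact ⟨x, hx, hxab⟩
    by_cases hyab : y ≠ a ∧ y ≠ b
    · exact ⟨y, hy, hyab⟩
    refine ⟨z, hz, ?_, ?_⟩ <;> rintro rfl <;> grind
  have hsymm : ∀ x y, EdgeOrb (plusGroup G H) v x v y → EdgeOrb (plusGroup G H) v y v x := by
    rintro x y ⟨g, hg, h1, rfl⟩
    refine ⟨g⁻¹, inv_mem hg, ?_, by simp⟩
    rw [Equiv.Perm.inv_eq_iff_eq, h1]
  by_cases hE : EdgeOrb (plusGroup G H) v a v c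
  · refine brooks_false hG hH hbs hnt huniv hb ha hc hca.symm (fun h => hab (hsymm _ _ h)) ?_
    rintro ⟨g, hg, h1, h2⟩
    obtain ⟨k, hk, h3, h4⟩ := hE
    refine hab ⟨g⁻¹ * k, mul_mem (inv_mem hg) hk, ?_, ?_⟩
    · rw [Equiv.Perm.mul_apply, Equiv.Perm.inv_eq_iff_eq, h3, h1]
    · rw [Equiv.Perm.mul_apply, Equiv.Perm.inv_eq_iff_eq, h4, h2]
  · exact brooks_false hG hH hbs hnt huniv ha hb hc hcb.symm hab hE

end Brooks

/-! ### From local homogeneity to almost biregularity -/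

section Regular

variable {G : SimpleGraph V} {Γ : Subgroup (Equiv.Perm V)}

theorem ram_map {γ : Equiv.Perm V} (hγ : γ ∈ autGroup G) {x : V} (h : IsRamification G x) :
    IsRamification G (γ x) := by
  obtain ⟨a, b, c, h1, h2, h3, ha, hb, hc⟩ := h
  exact ⟨γ a, γ b, γ c, fun h => h1 (γ.injective h), fun h => h2 (γ.injective h),
    fun h => h3 (γ.injective h), (hγ x a).2 ha, (hγ x b).2 hb, (hγ x c).2 hc⟩

theorem not_ram_map {γ : Equiv.Perm V} (hγ : γ ∈ autGroup G) {x : V} (h : ¬ IsRamification G x) :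
    ¬ IsRamification G (γ x) := fun h' => h (by simpa using ram_map (inv_mem hγ) h')

theorem eq_of_not_ram {x a b c : V} (h : ¬ IsRamification G x) (ha : G.Adj x a) (hb : G.Adj x b)
    (hc : G.Adj x c) (hab : a ≠ b) (hac : a ≠ c) : b = c := by
  by_contra hbc
  exact h ⟨a, b, c, hab, hac, hbc, ha, hb, hc⟩

/-- Without ramification points, an automorphism fixing an edge fixes everything. -/
theorem exists_ram (hG : G.IsTree) {H : Subgroup (Equiv.Perm V)} (hH : H ≤ autGroup G)
    (hnt : plusGroup G H ≠ ⊥) : ∃ r, IsRamification G r := by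
  by_contra hno
  push Not at hno
  apply hnt
  unfold plusGroup
  rw [Subgroup.closure_eq_bot_iff]
  rintro e ⟨heH, x, y, hxy, hx, hy⟩
  have key : ∀ {z w : V}, G.Walk z w → (e z = z ∧ ∃ a, G.Adj z a ∧ e a = a) → e w = w := by
    intro z w p
    induction p with
    | nil => exact fun h => h.1
    | @cons z t w hzt _ ih =>
      rintro ⟨hz, a, hza, ha⟩
      refine ih ⟨?_, z, hzt.symm, hz⟩
      by_cases hat : a = t
      · rwa [← hat]
      · have h1 : G.Adj z (e t) := by
          have := (hH heH z t).2 hzt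
          rwa [hz] at this
        refine (eq_of_not_ram (hno z) hza hzt h1 hat fun h => hat ?_).symm
        exact e.injective (by rw [ha, ← h])
  rw [Set.mem_singleton_iff]
  ext z
  obtain ⟨p⟩ := hG.connected.preconnected x z
  exact key p ⟨hx, y, hxy, hy⟩

theorem no_leaf (hG : G.IsTree) {H : Subgroup (Equiv.Perm V)} (hH : H ≤ autGroup G)
    (huniv : ∀ C, InvSubtree G (plusGroup G H) C → C = Set.univ) {u w : V} (huw : G.Adj u w) :
    ∃ w', G.Adj u w' ∧ w' ≠ w := by
  have hΓ : plusGroup G H ≤ autGroup G := (plus_le G H).trans hH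
  obtain ⟨γ, hγ, h⟩ := half_tree_meets hG hΓ huniv w huw.symm
  have hne : u ≠ γ w := by
    rintro h'
    exact plus_not_adj hG hH hγ w (h' ▸ huw.symm)
  obtain ⟨w', hw', hd⟩ := exists_toward hG hne
  exact ⟨w', hw', by rintro rfl; omega⟩

/-- The sphere of radius `i ≤ k` around `p 0` is a single orbit, if the stabilizer of `p 0` is
transitive on neighbors and the vertices between `p 0` and `p k` are not ramified. -/
theorem reach (hG : G.IsTree) (hΓ : Γ ≤ autGroup G) {p : ℕ → V} {k : ℕ}
    (hom : ∀ a b, G.Adj (p 0) a → G.Adj (p 0) b → ∃ g ∈ Γ, g (p 0) = p 0 ∧ g a = b)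
    (hp : ∀ i j, i ≤ j → j ≤ k → G.dist (p i) (p j) + i = j)
    (hram : ∀ i, 0 < i → i < k → ¬ IsRamification G (p i)) :
    ∀ i ≤ k, ∀ y, G.dist (p 0) y = i → ∃ h ∈ Γ, h (p 0) = p 0 ∧ h (p i) = y := by
  intro i
  induction i with
  | zero =>
    intro _ y hy
    exact ⟨1, one_mem _, rfl, eq_of_dist_zero hG hy⟩
  | succ i ih =>
    intro hi y hy
    rcases Nat.eq_zero_or_pos i with rfl | hpos
    · have h1 := hp 0 1 (by omega) hi
      exact hom _ _ (SimpleGraph.dist_eq_one_iff_adj.1 h1) (SimpleGraph.dist_eq_one_iff_adj.1 hy)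
    have hne : y ≠ p 0 := by
      rintro rfl
      simp at hy
    obtain ⟨y', hyy', hd⟩ := exists_toward hG hne
    have e1 := dist_sym G y' (p 0)
    have e2 := dist_sym G y (p 0)
    obtain ⟨h, hh, h0, hi'⟩ := ih (by omega) y' (by omega)
    refine ⟨h, hh, h0, ?_⟩
    have hnr := not_ram_map (hΓ hh) (hram i hpos (by omega))
    have a1 : G.Adj (p i) (p (i - 1)) := by
      have := hp (i - 1) i (by omega) (by omega)
      exact (SimpleGraph.dist_eq_one_iff_adj.1 (by omega)).symm
    have a2 : G.Adj (p i) (p (i + 1)) := by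
      have := hp i (i + 1) (by omega) (by omega)
      exact SimpleGraph.dist_eq_one_iff_adj.1 (by omega)
    have d1 := hp 0 (i - 1) (by omega) (by omega)
    have d2 := hp 0 (i + 1) (by omega) (by omega)
    refine eq_of_not_ram hnr ((hΓ hh _ _).2 a1) ((hΓ hh _ _).2 a2) (hi' ▸ hyy'.symm) ?_ ?_
    · intro h'
      rw [h.injective h'] at d1
      omega
    · rintro rfl
      have := dist_aut hG (hΓ hh) (p 0) (p (i - 1))
      rw [h0] at this
      omega

theorem reach_orb (hG : G.IsTree) (hΓ : Γ ≤ autGroup G) {p : ℕ → V} {k : ℕ}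
    (hom : ∀ a b, G.Adj (p 0) a → G.Adj (p 0) b → ∃ g ∈ Γ, g (p 0) = p 0 ∧ g a = b)
    (hp : ∀ i j, i ≤ j → j ≤ k → G.dist (p i) (p j) + i = j)
    (hram : ∀ i, 0 < i → i < k → ¬ IsRamification G (p i)) {i : ℕ} (hi : i ≤ k) {x y : V}
    (hx : Orb Γ (p 0) x) (hd : G.dist x y = i) : Orb Γ (p i) y := by
  obtain ⟨g, hg, rfl⟩ := hx
  obtain ⟨h, hh, -, h2⟩ := reach hG hΓ hom hp hram i hi (g⁻¹ y) (by
    rw [← dist_aut hG (hΓ hg)]; simpa using hd)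
  exact ⟨g * h, mul_mem hg hh, by simp [h2]⟩

/-- The distance from `d` to the nearest multiple of `2 * k`; the color of a vertex at distance `d`
from the base point. -/
def zigzag (k d : ℕ) : ℕ := if (d / k) % 2 = 0 then d % k else k - d % k

theorem zigzag_eq {k : ℕ} (hk : 0 < k) (q i : ℕ) (hi : i ≤ k) :
    zigzag k (q * k + i) = if q % 2 = 0 then i else k - i := by
  unfold zigzag
  rcases hi.eq_or_lt with rfl | hi
  · rw [show q * i + i = i * (q + 1) by ring, Nat.mul_mod_right, Nat.mul_div_cancel_left _ hk]
    split_ifs <;> omega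
  · rw [show q * k + i = i + k * q by ring, Nat.add_mul_mod_self_left, Nat.mod_eq_of_lt hi,
      Nat.add_mul_div_left _ _ hk, Nat.div_eq_of_lt hi, zero_add]

theorem zigzag_le {k : ℕ} (hk : 0 < k) (d : ℕ) : zigzag k d ≤ k := by
  have := Nat.mod_lt d hk
  unfold zigzag
  split_ifs <;> omega

theorem zigzag_succ {k : ℕ} (hk : 0 < k) (d : ℕ) :
    zigzag k (d + 1) = zigzag k d + 1 ∨ zigzag k d = zigzag k (d + 1) + 1 := by
  have h1 := Nat.mod_lt d hk
  have h2 := Nat.div_add_mod' d k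
  have h3 := zigzag_eq hk (d / k) (d % k) h1.le
  have h4 := zigzag_eq hk (d / k) (d % k + 1) h1
  rw [h2] at h3
  rw [← add_assoc, h2] at h4
  rw [h3, h4]
  split_ifs <;> omega

theorem zigzag_mid {k : ℕ} (hk : 0 < k) (d : ℕ) (h0 : 0 < zigzag k (d + 1))
    (h1 : zigzag k (d + 1) < k) :
    zigzag k (d + 2) + zigzag k d = 2 * zigzag k (d + 1) := by
  have a1 := Nat.mod_lt (d + 1) hk
  have a2 := Nat.div_add_mod' (d + 1) k
  have a3 := zigzag_eq hk ((d + 1) / k) ((d + 1) % k) a1.le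
  rw [a2] at a3
  have a4 : 0 < (d + 1) % k := by
    by_contra h
    rw [a3] at h0 h1
    split_ifs at h0 h1 <;> omega
  have a5 := zigzag_eq hk ((d + 1) / k) ((d + 1) % k + 1) a1
  have a6 := zigzag_eq hk ((d + 1) / k) ((d + 1) % k - 1) (by omega)
  rw [← add_assoc, a2] at a5
  rw [show (d + 1) / k * k + ((d + 1) % k - 1) = d by omega] at a6
  rw [a3, a5, a6]
  split_ifs <;> omega

theorem card_ge_three {v : V} (h : IsRamification G v) : 3 ≤ Cardinal.mk (G.neighborSet v) := by
  classical
  obtain ⟨a, b, c, h1, h2, h3, ha, hb, hc⟩ := h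
  have hs : ((({a, b, c} : Finset V)) : Set V) ⊆ G.neighborSet v := by
    intro x hx
    simp only [Finset.coe_insert, Finset.coe_singleton, Set.mem_insert_iff,
      Set.mem_singleton_iff] at hx
    rcases hx with rfl | rfl | rfl <;> assumption
  have h := Cardinal.mk_le_mk_of_subset hs
  have hcard : ({a, b, c} : Finset V).card = 3 := Finset.card_eq_three.2 ⟨a, b, c, h1, h2, h3, rfl⟩
  have : Cardinal.mk ((({a, b, c} : Finset V)) : Set V) = 3 := by
    rw [Finset.coe_sort_coe, Cardinal.mk_coe_finset, hcard]; rfl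
  rwa [this] at h

theorem card_orb (hΓ : Γ ≤ autGroup G) {x y : V} (h : Orb Γ x y) :
    Cardinal.mk (G.neighborSet y) = Cardinal.mk (G.neighborSet x) := by
  obtain ⟨γ, hγ, rfl⟩ := h
  refine (Cardinal.mk_congr (γ.subtypeEquiv fun a => ?_)).symm
  exact (hΓ hγ x a).symm

/-- A ramification point, and the nearest ramification point beyond one of its edges. -/
theorem exists_segment (hG : G.IsTree) {H : Subgroup (Equiv.Perm V)} (hH : H ≤ autGroup G)
    (hnt : plusGroup G H ≠ ⊥) (huniv : ∀ C, InvSubtree G (plusGroup G H) C → C = Set.univ) :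
    ∃ (k : ℕ) (p : ℕ → V), 0 < k ∧ (∀ i j, i ≤ j → j ≤ k → G.dist (p i) (p j) + i = j) ∧
      IsRamification G (p 0) ∧ IsRamification G (p k) ∧
      ∀ i, 0 < i → i < k → ¬ IsRamification G (p i) := by
  have hΓ : plusGroup G H ≤ autGroup G := (plus_le G H).trans hH
  obtain ⟨r, hr⟩ := exists_ram hG hH hnt
  obtain ⟨q, -, -, -, -, -, hq, -, -⟩ := id hr
  have hne : {s | IsRamification G s ∧ G.dist q s + 1 = G.dist r s}.Nonempty := by
    obtain ⟨γ, hγ, h⟩ := half_tree_meets hG hΓ huniv r hq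
    exact ⟨γ r, ram_map (hΓ hγ) hr, h⟩
  obtain ⟨s, ⟨hs, hqs⟩, hmin⟩ := WellFounded.has_min (measure (fun c => G.dist r c)).wf _ hne
  have hex : ∀ i, ∃ x, i ≤ G.dist r s → G.dist r x = i ∧ G.dist r x + G.dist x s = G.dist r s := by
    intro i
    by_cases hi : i ≤ G.dist r s
    · obtain ⟨x, hx⟩ := exists_pt hG r s hi
      exact ⟨x, fun _ => hx⟩
    · exact ⟨r, fun h => absurd h hi⟩
  choose p hp using hex
  have hp0 : p 0 = r := (eq_of_dist_zero hG (hp 0 (Nat.zero_le _)).1).symm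
  have hpk : p (G.dist r s) = s := by
    have := hp (G.dist r s) le_rfl
    exact eq_of_dist_zero hG (by omega)
  refine ⟨G.dist r s, p, by omega, fun i j hij hj => ?_, hp0 ▸ hr, hpk.symm ▸ hs,
    fun i h0 hi hram => ?_⟩
  · obtain ⟨h1, h2⟩ := hp i (by omega)
    obtain ⟨h3, h4⟩ := hp j hj
    have := dist_of_btw hG h2 h4 (by omega)
    omega
  · obtain ⟨h1, h2⟩ := hp i hi.le
    have h3 := SimpleGraph.dist_eq_one_iff_adj.2 hq
    have h4 := dist_of_btw hG (x := r) (y := s) (p := q) (q := p i) (by omega) h2 (by omega)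
    exact hmin (p i) ⟨hram, by omega⟩ (show G.dist r (p i) < G.dist r s by omega)

/-- A vertex `y` lies in the orbit of the point of the segment `p` given by the zigzag of the
distance from `p 0` to `y`. -/
theorem orb_zigzag (hG : G.IsTree) (hΓ : Γ ≤ autGroup G) {p : ℕ → V} {k : ℕ} (hk : 0 < k)
    (hom : ∀ v, IsRamification G v → ∀ a b, G.Adj v a → G.Adj v b → ∃ g ∈ Γ, g v = v ∧ g a = b)
    (hp : ∀ i j, i ≤ j → j ≤ k → G.dist (p i) (p j) + i = j)
    (hr0 : IsRamification G (p 0)) (hrk : IsRamification G (p k))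
    (hram : ∀ i, 0 < i → i < k → ¬ IsRamification G (p i)) (y : V) :
    Orb Γ (p (zigzag k (G.dist (p 0) y))) y := by
  have hA : ∀ {i x y}, i ≤ k → Orb Γ (p 0) x → G.dist x y = i → Orb Γ (p i) y :=
    fun hi hx hd => reach_orb hG hΓ (hom _ hr0) hp hram hi hx hd
  have hB : ∀ {i x y}, i ≤ k → Orb Γ (p k) x → G.dist x y = i → Orb Γ (p (k - i)) y := by
    intro i x y hi hx hd
    refine reach_orb hG hΓ (p := fun i => p (k - i)) (hom _ hrk) (fun i j hij hj => ?_)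
      (fun i h0 hi => hram _ (by omega) (by omega)) hi hx hd
    have := hp (k - j) (k - i) (by omega) (by omega)
    rw [dist_sym G (p (k - i))]
    omega
  have hstep : ∀ {q i x y}, i ≤ k → Orb Γ (p (if q % 2 = 0 then 0 else k)) x → G.dist x y = i →
      Orb Γ (p (if q % 2 = 0 then i else k - i)) y := by
    intro q i x y hi hx hd
    by_cases hq : q % 2 = 0
    · rw [if_pos hq] at hx ⊢; exact hA hi hx hd
    · rw [if_neg hq] at hx ⊢; exact hB hi hx hd
  have hmult : ∀ q y, G.dist (p 0) y = q * k → Orb Γ (p (if q % 2 = 0 then 0 else k)) y := by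
    intro q
    induction q with
    | zero =>
      intro y hy
      rw [zero_mul] at hy
      exact ⟨1, one_mem _, by simpa using eq_of_dist_zero hG hy⟩
    | succ q ih =>
      intro y hy
      rw [Nat.succ_mul] at hy
      obtain ⟨x, h1, h2⟩ := exists_pt hG (p 0) y (show q * k ≤ _ by omega)
      have h := hstep le_rfl (ih x h1) (show G.dist x y = k by omega)
      convert h using 2
      split_ifs <;> omega
  have h1 := Nat.mod_lt (G.dist (p 0) y) hk
  have h2 := Nat.div_add_mod' (G.dist (p 0) y) k
  obtain ⟨x, h3, h4⟩ := exists_pt hG (p 0) y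
    (show G.dist (p 0) y / k * k ≤ G.dist (p 0) y by omega)
  exact hstep h1.le (hmult _ x h3) (by omega)

/-- The coloring is the zigzag of the distance to `p 0`. -/
theorem almostBiregular_of_homogeneous (hG : G.IsTree) (hΓ : Γ ≤ autGroup G) {p : ℕ → V} {k : ℕ}
    (hk : 0 < k)
    (hom : ∀ v, IsRamification G v → ∀ a b, G.Adj v a → G.Adj v b → ∃ g ∈ Γ, g v = v ∧ g a = b)
    (hp : ∀ i j, i ≤ j → j ≤ k → G.dist (p i) (p j) + i = j)
    (hr0 : IsRamification G (p 0)) (hrk : IsRamification G (p k))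
    (hram : ∀ i, 0 < i → i < k → ¬ IsRamification G (p i))
    (hleaf : ∀ u w, G.Adj u w → ∃ w', G.Adj u w' ∧ w' ≠ w) :
    IsAlmostBiregular G (Cardinal.mk (G.neighborSet (p 0)))
      (Cardinal.mk (G.neighborSet (p k))) := by
  have horb := orb_zigzag hG hΓ hk hom hp hr0 hrk hram
  have hadj : ∀ v w, G.Adj v w →
      zigzag k (G.dist (p 0) w) = zigzag k (G.dist (p 0) v) + 1 ∨
        zigzag k (G.dist (p 0) v) = zigzag k (G.dist (p 0) w) + 1 := by
    intro v w hvw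
    have h := dist_adj hG (p 0) hvw
    rw [dist_sym G v, dist_sym G w] at h
    rcases h with h | h <;> rw [h]
    · exact (zigzag_succ hk _).symm
    · exact zigzag_succ hk _
  refine ⟨k, hk, fun y => zigzag k (G.dist (p 0) y), fun y => zigzag_le hk _, fun v hv => ?_,
    fun v hv => ?_, fun v h0 h1 => ?_⟩
  · refine ⟨fun w hvw => ?_, card_orb hΓ (hv ▸ horb v)⟩
    have := hadj v w hvw
    dsimp only at hv ⊢
    omega
  · refine ⟨fun w hvw => ?_, card_orb hΓ (hv ▸ horb v)⟩
    have := hadj v w hvw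
    have := zigzag_le hk (G.dist (p 0) w)
    dsimp only at hv ⊢
    omega
  · dsimp only at h0 h1 ⊢
    have hnr : ¬ IsRamification G v := by
      obtain ⟨γ, hγ, hγv⟩ := horb v
      rw [← hγv]
      exact not_ram_map (hΓ hγ) (hram _ h0 h1)
    have hne : v ≠ p 0 := by
      rintro rfl
      simp [zigzag] at h0
    obtain ⟨t, ht, hd⟩ := exists_toward hG hne
    obtain ⟨t', ht', htt⟩ := hleaf v t ht
    have hd' : G.dist t' (p 0) = G.dist v (p 0) + 1 := by
      rcases dist_adj hG (p 0) ht' with h | h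
      · exact absurd (toward_unique hG ht' ht (y := p 0) h.symm hd) htt
      · exact h
    rw [dist_sym G v, dist_sym G t] at hd
    rw [dist_sym G v, dist_sym G t'] at hd'
    have hall : ∀ w, G.Adj v w → w = t ∨ w = t' := by
      intro w hw
      by_contra hcon
      push Not at hcon
      exact hcon.2 (eq_of_not_ram hnr ht hw ht' hcon.1.symm htt.symm)
    rw [← hd] at h0 h1 hd'
    have hmid := zigzag_mid hk _ h0 h1
    have hs := zigzag_succ hk (G.dist (p 0) t)
    rw [← hd]
    rcases hs with hs | hs
    · refine ⟨t, t', htt.symm, ht, ht', by omega, ?_, hall⟩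
      rw [hd']
      show zigzag k (G.dist (p 0) t + 2) = _
      omega
    · refine ⟨t', t, htt, ht', ht, ?_, by omega, fun w hw => (hall w hw).symm⟩
      rw [hd']
      show zigzag k (G.dist (p 0) t + 2) = _
      omega

end Regular

/-- if `G ≤ Aut(A)` leaves no nonempty proper subtree invariant,
stabilizes no end, and `G⁺` is boundedly simple and nontrivial, then `A` is an
almost `(n,m)`-regular tree for some `n, m ≥ 3`. -/
theorem action_theorem (G : SimpleGraph V) (hG : G.IsTree)
    (H : Subgroup (Equiv.Perm V)) (hH : H ≤ autGroup G)
    (hsub : NoInvariantSubtree G H) (hend : NoStabilizedEnd G H)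
    (hbs : IsBoundedlySimple ↥(plusGroup G H)) (hnt : plusGroup G H ≠ ⊥) :
    ∃ n m : Cardinal.{u}, 3 ≤ n ∧ 3 ≤ m ∧ IsAlmostBiregular G n m := by
  have hΓ : plusGroup G H ≤ autGroup G := (plus_le G H).trans hH
  have huniv : ∀ C, InvSubtree G (plusGroup G H) C → C = Set.univ := fun C hC =>
    inv_subtree_eq_univ hG hH hΓ (fun h hh γ hγ => plus_normal hH hh hγ) hsub hend hnt hC
  obtain ⟨k, p, hk, hp, hr0, hrk, hram⟩ := exists_segment hG hH hnt huniv
  exact ⟨_, _, card_ge_three hr0, card_ge_three hrk,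
    almostBiregular_of_homogeneous hG hΓ hk
      (fun v hv a b ha hb => ram_homogeneous hG hH hbs hnt huniv hv ha hb) hp hr0 hrk hram
      (fun u w huw => no_leaf hG hH huniv huw)⟩

end BSTrees
end

section
/- Let A be a tree, b an end of A, and α ∈ Aut(A) an automorphism that stabilizes b (i.e., maps every ray in b to a ray in b). If α is not a translation (i.e., α fixes some vertex or swaps the endpoints of some edge), then α fixes some vertex and moreover fixes pointwise some ray belonging to b. -/
/-!
In a tree, two distinct neighbours of a vertex cannot both be closer to a given base vertex
(`parent_unique`), so the distance from the base vertex to the points of a ray eventually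
increases by one at each step (`exists_dist_ray`). On the other hand, `α ∘ r` and `r` meet
arbitrarily far out.

If `α` fixes `v`, it preserves the distance to `v`, so at such far meeting points
`α (r m) = r n` forces `m = n`. Fixed points on `r` then propagate back towards `v`, and `α`
fixes a tail of `r` (`exists_fixed_tail`). If `α` swapped adjacent vertices `x` and `y`, it
would negate the difference of the distances to `x` and `y`, which is eventually a nonzero
constant along `r`; this is impossible (`not_isInversion`).
-/

open Pointwise

namespace BSTrees

universe u

variable {V : Type u} {I : Type*}

/-- In a tree rooted at `u`, a vertex has at most one neighbour closer to the root. -/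
theorem parent_unique {G : SimpleGraph V} (hG : G.IsTree) {u a b c : V}
    (hb : G.Adj b a) (hc : G.Adj c a) (hdb : G.dist u b + 1 = G.dist u a)
    (hdc : G.dist u c + 1 = G.dist u a) : b = c := by
  obtain ⟨p, hp⟩ := hG.connected.exists_walk_length_eq_dist u b
  obtain ⟨q, hq⟩ := hG.connected.exists_walk_length_eq_dist u c
  have hP : (p.concat hb).IsPath :=
    SimpleGraph.Walk.isPath_of_length_eq_dist _ (by simp; omega)
  have hQ : (q.concat hc).IsPath :=
    SimpleGraph.Walk.isPath_of_length_eq_dist _ (by simp; omega)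
  have h := (hG.existsUnique_path u a).unique hP hQ
  simpa using congrArg SimpleGraph.Walk.penultimate h

/-- The distance from `u` along a ray cannot have a local maximum, by `parent_unique` and
injectivity of the ray; it changes by one at each step and cannot decrease forever, so it
eventually grows at unit speed. -/
theorem exists_dist_ray {G : SimpleGraph V} (hG : G.IsTree) (u : V) {r : ℕ → V}
    (hr : IsRay G r) :
    ∃ N, ∀ n, N ≤ n → G.dist u (r (n + 1)) = G.dist u (r n) + 1 := by
  have hstep : ∀ n, G.dist u (r (n + 1)) = G.dist u (r n) + 1 ∨
      G.dist u (r n) = G.dist u (r (n + 1)) + 1 := fun n =>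
    (hG.dist_eq_dist_add_one_of_adj u (hr.2 n)).symm
  have hinc : ∃ N, G.dist u (r (N + 1)) = G.dist u (r N) + 1 := by
    by_contra! hcon
    have hdec : ∀ n, G.dist u (r n) + n = G.dist u (r 0) := by
      intro n
      induction n with
      | zero => rfl
      | succ n ih =>
        have := (hstep n).resolve_left (hcon n)
        omega
    have := hdec (G.dist u (r 0) + 1)
    omega
  obtain ⟨N, hN⟩ := hinc
  refine ⟨N, fun n hn => ?_⟩
  induction n, hn using Nat.le_induction with
  | base => exact hN
  | succ n hn ih =>
    refine (hstep (n + 1)).resolve_right fun h => ?_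
    have := hr.1 (parent_unique hG (hr.2 n) (hr.2 (n + 1)).symm ih.symm h.symm)
    omega

theorem dist_ray_add {G : SimpleGraph V} {u : V} {r : ℕ → V} {N : ℕ}
    (h : ∀ n, N ≤ n → G.dist u (r (n + 1)) = G.dist u (r n) + 1) {n : ℕ} (hn : N ≤ n) :
    G.dist u (r n) + N = G.dist u (r N) + n := by
  induction n, hn using Nat.le_induction with
  | base => rfl
  | succ n hn ih =>
    have := h n hn
    omega

theorem IsAut.dist_le {G : SimpleGraph V} (hG : G.Connected) {α : Equiv.Perm V}
    (hα : IsAut G α) (x y : V) : G.dist (α x) (α y) ≤ G.dist x y := by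
  obtain ⟨p, hp⟩ := hG.exists_walk_length_eq_dist x y
  let f : G →g G := ⟨α, fun {a b} h => (hα a b).2 h⟩
  have h : G.dist (f x) (f y) ≤ (p.map f).length := SimpleGraph.dist_le _
  rw [SimpleGraph.Walk.length_map, hp] at h
  exact h

theorem IsAut.dist_eq {G : SimpleGraph V} (hG : G.Connected) {α : Equiv.Perm V}
    (hα : IsAut G α) (x y : V) : G.dist (α x) (α y) = G.dist x y := by
  refine le_antisymm (hα.dist_le hG x y) ?_
  have hinv : IsAut G α⁻¹ := (autGroup G).inv_mem hα
  simpa using hinv.dist_le hG (α x) (α y)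

/-- Sequences with the same end meet arbitrarily far out on both of them. -/
theorem SameEnd.exists_ge {s r : ℕ → V} (h : SameEnd s r) (N : ℕ) :
    ∃ m n, N ≤ m ∧ N ≤ n ∧ s m = r n := by
  by_contra! hcon
  refine h (((Set.finite_Iio N).image s |>.union ((Set.finite_Iio N).image r)).subset ?_)
  rintro v ⟨⟨m, rfl⟩, ⟨n, hn⟩⟩
  rcases lt_or_ge m N with hm | hm
  · exact Or.inl ⟨m, hm, rfl⟩
  · rcases lt_or_ge n N with hnN | hnN
    · exact Or.inr ⟨n, hnN, hn⟩
    · exact absurd hn.symm (hcon m n hm hnN)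

/-- An automorphism fixing a vertex `v` and stabilizing an end fixes a tail of any ray `r` of
that end. Far out on `r`, the distance to `v` determines the vertex of `r`, so arbitrarily far
vertices of `r` are fixed; fixed points then propagate towards `v` by `parent_unique`. -/
theorem exists_fixed_tail {G : SimpleGraph V} (hG : G.IsTree) {α : Equiv.Perm V}
    (hα : IsAut G α) {r : ℕ → V} (hr : IsRay G r) (hs : SameEnd (α ∘ r) r) {v : V}
    (hv : α v = v) : ∃ N, ∀ n, N ≤ n → α (r n) = r n := by
  obtain ⟨N, hN⟩ := exists_dist_ray hG v hr
  have hd : ∀ w, G.dist v (α w) = G.dist v w := fun w => by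
    simpa [hv] using hα.dist_eq hG.connected v w
  have hback : ∀ k n, N ≤ n → α (r (n + k)) = r (n + k) → α (r n) = r n := by
    intro k
    induction k with
    | zero => exact fun n _ h => h
    | succ k ih =>
      intro n hn h
      refine ih n hn ?_
      have hadj := (hα _ _).2 (hr.2 (n + k))
      rw [← add_assoc] at h
      rw [h] at hadj
      refine parent_unique hG hadj (hr.2 (n + k)) (u := v) ?_ (hN _ (by omega)).symm
      rw [hd]
      exact (hN _ (by omega)).symm
  refine ⟨N, fun n hn => ?_⟩
  obtain ⟨m, m', hm, hm', h⟩ := hs.exists_ge n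
  have h1 := dist_ray_add hN (hn.trans hm)
  have h2 := dist_ray_add hN (hn.trans hm')
  have h3 := hd (r m)
  simp only [Function.comp_apply] at h
  rw [h] at h3
  obtain rfl : m = m' := by omega
  obtain ⟨k, rfl⟩ := Nat.exists_eq_add_of_le hm
  exact hback k n hn h

/-- Along a ray, the difference of the distances to `x` and `y` is eventually a constant,
nonzero because adjacent vertices of a tree are never equidistant from a third one. Swapping
`x` and `y` would negate this constant. -/
theorem not_isInversion {G : SimpleGraph V} (hG : G.IsTree) {α : Equiv.Perm V}
    (hα : IsAut G α) {r : ℕ → V} (hr : IsRay G r) (hs : SameEnd (α ∘ r) r) :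
    ¬ IsInversion G α := by
  rintro ⟨x, y, hxy, hx, hy⟩
  obtain ⟨N, hN⟩ := exists_dist_ray hG x hr
  obtain ⟨M, hM⟩ := exists_dist_ray hG y hr
  have hN' : ∀ n, max N M ≤ n → _ := fun n hn => hN n ((le_max_left N M).trans hn)
  have hM' : ∀ n, max N M ≤ n → _ := fun n hn => hM n ((le_max_right N M).trans hn)
  obtain ⟨m, n, hm, hn, h⟩ := hs.exists_ge (max N M)
  simp only [Function.comp_apply] at h
  have e1 := hα.dist_eq hG.connected x (r m)
  have e2 := hα.dist_eq hG.connected y (r m)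
  rw [hx, h] at e1
  rw [hy, h] at e2
  have hne := hG.dist_ne_of_adj (r m) hxy
  rw [G.dist_comm, G.dist_comm (u := r m)] at hne
  have a1 := dist_ray_add hN' hm
  have a2 := dist_ray_add hN' hn
  have b1 := dist_ray_add hM' hm
  have b2 := dist_ray_add hM' hn
  omega

/-- an automorphism stabilizing an end which is not a translation
fixes a vertex, and fixes pointwise some ray belonging to that end. -/
theorem stabilizes_end_not_translation (G : SimpleGraph V) (hG : G.IsTree)
    (α : Equiv.Perm V) (hα : α ∈ autGroup G)
    (r : ℕ → V) (hr : IsRay G r)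
    (hstab : ∀ r' : ℕ → V, IsRay G r' → SameEnd r' r → SameEnd (α ∘ r') r)
    (hnt : ¬ IsTranslation G α) :
    (∃ v, α v = v) ∧
      ∃ r' : ℕ → V, IsRay G r' ∧ SameEnd r' r ∧ ∀ n, α (r' n) = r' n := by
  have hs : SameEnd (α ∘ r) r := by
    refine hstab r hr ?_
    rw [SameEnd, Set.inter_self]
    exact Set.infinite_range_of_injective hr.1
  have hrot : IsRotation α := by
    by_contra hrot
    exact hnt ⟨hrot, not_isInversion hG hα hr hs⟩
  obtain ⟨v, hv⟩ := hrot
  obtain ⟨N, hN⟩ := exists_fixed_tail hG hα hr hs hv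
  have hinj : Function.Injective fun n => r (N + n) :=
    hr.1.comp (add_right_injective N)
  refine ⟨⟨v, hv⟩, fun n => r (N + n), ⟨hinj, fun n => hr.2 (N + n)⟩, ?_,
    fun n => hN _ (Nat.le_add_right N n)⟩
  refine (Set.infinite_range_of_injective hinj).mono ?_
  rintro _ ⟨n, rfl⟩
  exact ⟨⟨n, rfl⟩, ⟨N + n, rfl⟩⟩

end BSTrees
end
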